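/- arXiv:1601.07113 — 5 statements merged into one kernel-verified Lean document; each statement's English description precedes it below -/
import Mathlib

section
/- Let α > 0, β > 0, t₀ > 0, let Φ : H → ℝ be convex and twice continuously differentiable, and let x : [t₀, ∞) → H be a solution of (DIN-AVD). Then for every θ ∈ [0, β] and every t ≥ max{t₀, αθ/2}, the derivative of the energy W_θ satisfies W_θ′(t) ≤ −(α/(2t))‖ẋ(t)‖² − (α/(2t))‖ẋ(t) + θ∇Φ(x(t))‖². -/
open Filter MeasureTheory Set
open scoped Topology RealInnerProductSpace

variable {H : Type*} [NormedAddCommGroup H] [InnerProductSpace ℝ H] [CompleteSpace H]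

/-- `x`, together with its first and second derivatives `x'`, `x''`, is a twice continuously
differentiable solution of (DIN-AVD) on `[t₀, ∞)`:
`ẍ(t) + (α/t) ẋ(t) + β ∇²Φ(x(t)) ẋ(t) + ∇Φ(x(t)) = 0`. -/
def IsDINAVDSolution (α β t₀ : ℝ) (Φ : H → ℝ) (x x' x'' : ℝ → H) : Prop :=
  (∀ t ∈ Set.Ici t₀, HasDerivAt x (x' t) t) ∧
  (∀ t ∈ Set.Ici t₀, HasDerivAt x' (x'' t) t) ∧
  ContinuousOn x'' (Set.Ici t₀) ∧
  ∀ t ∈ Set.Ici t₀,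
    x'' t + (α / t) • x' t + β • (fderiv ℝ (gradient Φ) (x t)) (x' t)
      + gradient Φ (x t) = 0

/-- The energy function `W_θ`. -/
noncomputable def energyW (β θ : ℝ) (Φ : H → ℝ) (x x' : ℝ → H) (t : ℝ) : ℝ :=
  Φ (x t) + (1 / 2) * ‖x' t + θ • gradient Φ (x t)‖ ^ 2
    + (θ * (β - θ) / 2) * ‖gradient Φ (x t)‖ ^ 2

theorem aux_hasDerivAt_comp (Φ : H → ℝ) (hΦ : ContDiff ℝ 2 Φ) (x : ℝ → H) (v : H) (t : ℝ)
    (hx : HasDerivAt x v t) :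
    HasDerivAt (fun s => Φ (x s)) ⟪gradient Φ (x t), v⟫ t := by
  have hd : DifferentiableAt ℝ Φ (x t) := (hΦ.differentiable (by norm_num)) (x t)
  have h := hd.hasGradientAt.hasFDerivAt.comp_hasDerivAt t hx
  simpa [Function.comp_def] using h

theorem aux_gradient_diff (Φ : H → ℝ) (hΦ : ContDiff ℝ 2 Φ) :
    Differentiable ℝ (gradient Φ) := by
  have h : ContDiff ℝ 1 (fderiv ℝ Φ) := hΦ.fderiv_right (by norm_num)
  exact (InnerProductSpace.toDual ℝ H).symm.toContinuousLinearEquiv.differentiable.comp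
    (h.differentiable (by norm_num))

theorem aux_gradient_comp (Φ : H → ℝ) (hΦ : ContDiff ℝ 2 Φ) (x : ℝ → H) (v : H) (t : ℝ)
    (hx : HasDerivAt x v t) :
    HasDerivAt (fun s => gradient Φ (x s)) (fderiv ℝ (gradient Φ) (x t) v) t :=
  (aux_gradient_diff Φ hΦ (x t)).hasFDerivAt.comp_hasDerivAt t hx

theorem aux_hess_nonneg (Φ : H → ℝ) (hconv : ConvexOn ℝ Set.univ Φ) (hΦ : ContDiff ℝ 2 Φ)
    (y v : H) : 0 ≤ ⟪v, fderiv ℝ (gradient Φ) y v⟫ := by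
  have hl : ∀ s : ℝ, HasDerivAt (fun s : ℝ => y + s • v) v s := fun s => by
    simpa using ((hasDerivAt_id s).smul_const v).const_add y
  have h1 : ∀ s : ℝ, HasDerivAt (fun s : ℝ => Φ (y + s • v)) ⟪gradient Φ (y + s • v), v⟫ s :=
    fun s => aux_hasDerivAt_comp Φ hΦ _ v s (hl s)
  have hc : ConvexOn ℝ Set.univ (fun s : ℝ => Φ (y + s • v)) := by
    refine ⟨convex_univ, fun a _ b _ p q hp hq hpq => ?_⟩
    have h := hconv.2 (mem_univ (y + a • v)) (mem_univ (y + b • v)) hp hq hpq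
    have e : y + (p • a + q • b) • v = p • (y + a • v) + q • (y + b • v) := by
      have : y = (p + q) • y := by rw [hpq, one_smul]
      nth_rewrite 1 [this]
      simp only [smul_eq_mul]
      module
    simpa only [e] using h
  have hm : Monotone (fun s : ℝ => ⟪gradient Φ (y + s • v), v⟫) := by
    have h := hc.monotoneOn_deriv (fun s _ => (h1 s).differentiableAt)
    have e : deriv (fun s : ℝ => Φ (y + s • v)) = fun s : ℝ => ⟪gradient Φ (y + s • v), v⟫ :=
      funext fun s => (h1 s).deriv
    rw [e] at h
    exact monotoneOn_univ.1 h
  have h2 := (aux_gradient_comp Φ hΦ _ v 0 (hl 0)).inner ℝ (hasDerivAt_const (0 : ℝ) v)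
  have h3 := (hm.monotoneOn Set.univ).derivWithin_nonneg (x := (0 : ℝ))
  rw [derivWithin_univ, h2.deriv] at h3
  simpa [real_inner_comm] using h3

theorem stmt0 (α β t₀ : ℝ) (hα : 0 < α) (hβ : 0 < β) (ht₀ : 0 < t₀)
    (Φ : H → ℝ) (hconv : ConvexOn ℝ Set.univ Φ) (hΦ : ContDiff ℝ 2 Φ)
    (x x' x'' : ℝ → H) (hsol : IsDINAVDSolution α β t₀ Φ x x' x'')
    (θ : ℝ) (hθ : θ ∈ Set.Icc 0 β)
    (t : ℝ) (ht : max t₀ (α * θ / 2) ≤ t)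
    (W' : ℝ) (hW' : HasDerivAt (energyW β θ Φ x x') W' t) :
    W' ≤ -(α / (2 * t)) * ‖x' t‖ ^ 2
        - (α / (2 * t)) * ‖x' t + θ • gradient Φ (x t)‖ ^ 2 := by
  obtain ⟨h1, h2, -, h4⟩ := hsol
  have htt : t₀ ≤ t := (le_max_left _ _).trans ht
  have hta : α * θ / 2 ≤ t := (le_max_right _ _).trans ht
  have htp : 0 < t := ht₀.trans_le htt
  have hx := h1 t htt
  have hx' := h2 t htt
  have hode := h4 t htt
  have hA := aux_hess_nonneg Φ hconv hΦ (x t) (x' t)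
  have hg := aux_gradient_comp Φ hΦ x _ t hx
  have hd := ((aux_hasDerivAt_comp Φ hΦ x _ t hx).add
    (((hx'.add (hg.const_smul θ)).norm_sq).const_mul (1 / 2))).add
      ((hg.norm_sq).const_mul (θ * (β - θ) / 2))
  have hW := hW'.unique hd
  simp only [Pi.add_apply, Pi.smul_apply] at hW
  generalize fderiv ℝ (gradient Φ) (x t) (x' t) = A at *
  generalize gradient Φ (x t) = g at *
  generalize x' t = v at *
  have hz : x'' t = -((α / t) • v) - β • A - g := by
    rw [← sub_eq_zero, ← hode]; abel
  rw [hz] at hW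
  have hθt : (α / t) * θ / 2 ≤ 1 := by
    rw [div_mul_eq_mul_div, div_div, div_le_one (by positivity)]; linarith
  have e : α / (2 * t) = (α / t) / 2 := by field_simp
  rw [e, hW, ← real_inner_self_eq_norm_sq, ← real_inner_self_eq_norm_sq]
  generalize α / t = a at *
  simp only [inner_add_left, inner_add_right, inner_sub_right, inner_neg_right,
    real_inner_smul_left, real_inner_smul_right, real_inner_comm v g]
  have hgg : 0 ≤ ⟪g, g⟫ := real_inner_self_nonneg
  have k1 := mul_nonneg (sub_nonneg.2 hθ.2) hA
  have k2 := mul_nonneg (mul_nonneg hθ.1 hgg) (sub_nonneg.2 hθt)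
  have := real_inner_comm v g
  nlinarith
end

section
/- Let α > 0, β > 0, t₀ > 0, let Φ : H → ℝ be convex and twice continuously differentiable with inf Φ > −∞, and let x : [t₀, ∞) → H be a solution of (DIN-AVD). Then ‖ẋ(t)‖ → 0 and ‖∇Φ(x(t))‖ → 0 as t → ∞, and moreover ∫_{t₀}^∞ (1/t)‖ẋ(t)‖² dt < ∞ and ∫_{t₀}^∞ (1/t)‖∇Φ(x(t))‖² dt < ∞. -/
open Filter MeasureTheory Set
open scoped Topology RealInnerProductSpace

variable {H : Type*} [NormedAddCommGroup H] [InnerProductSpace ℝ H] [CompleteSpace H]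

theorem anti_helper {f f' : ℝ → ℝ} {a : ℝ} (hd : ∀ t ∈ Ici a, HasDerivAt f (f' t) t)
    (hn : ∀ t ∈ Ici a, f' t ≤ 0) : AntitoneOn f (Ici a) := by
  apply antitoneOn_of_deriv_nonpos (convex_Ici a)
  · exact fun t ht => (hd t ht).continuousAt.continuousWithinAt
  · exact fun t ht => (hd t (interior_subset ht)).differentiableAt.differentiableWithinAt
  · intro t ht
    rw [(hd t (interior_subset ht)).deriv]
    exact hn t (interior_subset ht)

theorem lim_helper {f f' : ℝ → ℝ} {a b : ℝ} (hd : ∀ t ∈ Ici a, HasDerivAt f (f' t) t)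
    (hn : ∀ t ∈ Ici a, f' t ≤ 0) (hb : ∀ t ∈ Ici a, b ≤ f t) :
    ∃ L, Tendsto f atTop (𝓝 L) ∧ (∀ t ∈ Ici a, L ≤ f t) ∧ IntegrableOn f' (Ici a) := by
  have ha := anti_helper hd hn
  have hA : Antitone (fun t => f (max t a)) := fun s t hst =>
    ha (mem_Ici.2 (le_max_right _ _)) (mem_Ici.2 (le_max_right _ _)) (max_le_max_right a hst)
  have hB : BddBelow (range (fun t => f (max t a))) := by
    refine ⟨b, ?_⟩
    rintro _ ⟨t, rfl⟩
    exact hb _ (mem_Ici.2 (le_max_right _ _))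
  have hT := tendsto_atTop_ciInf hA hB
  have hT' : Tendsto f atTop (𝓝 (⨅ i, f (max i a))) := by
    refine hT.congr' ?_
    filter_upwards [eventually_ge_atTop a] with t ht
    rw [max_eq_left ht]
  refine ⟨_, hT', ?_, ?_⟩
  · intro t ht
    have := ciInf_le hB t
    simpa [max_eq_left (mem_Ici.1 ht)] using this
  · rw [integrableOn_Ici_iff_integrableOn_Ioi]
    exact integrableOn_Ioi_deriv_of_nonpos
      (hd a self_mem_Ici).continuousAt.continuousWithinAt
      (fun t ht => hd t (Ioi_subset_Ici_self ht)) (fun t ht => hn t (Ioi_subset_Ici_self ht)) hT'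

theorem growth_helper {α t₀ L : ℝ} (hα : 0 < α) (ht₀ : 0 < t₀) {x v : ℝ → H} {W W' : ℝ → ℝ}
    (hx : ∀ t ∈ Ici t₀, HasDerivAt x (v t) t)
    (hW : ∀ t ∈ Ici t₀, HasDerivAt W (W' t) t)
    (hW' : ∀ t ∈ Ici t₀, W' t ≤ -(α / t) * ‖v t‖ ^ 2)
    (hL : Tendsto W atTop (𝓝 L)) (hLW : ∀ t ∈ Ici t₀, L ≤ W t)
    {ε : ℝ} (hε : 0 < ε) (z : H) :
    ∃ T, t₀ ≤ T ∧ ∀ t ∈ Ici T, ‖x t - z‖ ≤ ε * t := by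
  have hanti : AntitoneOn W (Ici t₀) := anti_helper hW (fun t ht => (hW' t ht).trans (by
    have : 0 < t := ht₀.trans_le ht
    have : 0 ≤ (α / t) * ‖v t‖ ^ 2 := by positivity
    linarith))
  set e := ε / 2 with he
  have hepos : 0 < e := by positivity
  have h1 : ∀ᶠ t in atTop, W t < L + e ^ 2 * α :=
    hL.eventually (gt_mem_nhds (by have : 0 < e ^ 2 * α := by positivity
                                   linarith))
  obtain ⟨T, hT1, hT2⟩ := (h1.and (eventually_ge_atTop t₀)).exists
  have hTpos : 0 < T := ht₀.trans_le hT2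
  have key : ∀ t ∈ Ici T, ‖x t - x T‖ ≤ e * t := by
    intro t ht
    have ht' : T ≤ t := ht
    have sub : ∀ s, T ≤ s → s ∈ Ici t₀ := fun s hs => hT2.trans hs
    have hB : ∀ s, T ≤ s → HasDerivAt (fun s => e / 2 * s + s * (W T - W s) / (2 * e * α))
        (e / 2 + (1 * (W T - W s) + s * (- W' s)) / (2 * e * α)) s := by
      intro s hs
      have := (((hasDerivAt_id s).const_mul (e / 2)).add
        (((hasDerivAt_id s).mul ((hW s (sub s hs)).const_sub (W T))).div_const (2 * e * α)))
      refine this.congr_deriv ?_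
      simp
    have := image_norm_le_of_norm_deriv_right_le_deriv_boundary' (f := fun s => x s - x T)
      (f' := v) (a := T) (b := t) (B := fun s => e / 2 * s + s * (W T - W s) / (2 * e * α))
      (B' := fun s => e / 2 + (1 * (W T - W s) + s * (- W' s)) / (2 * e * α))
      (fun s hs => ((hx s (sub s hs.1)).sub_const _).continuousAt.continuousWithinAt)
      (fun s hs => ((hx s (sub s hs.1)).sub_const _).hasDerivWithinAt)
      (by simp; positivity)
      (fun s hs => (hB s hs.1).continuousAt.continuousWithinAt)
      (fun s hs => (hB s hs.1).hasDerivWithinAt)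
      (by
        intro s hs
        have hspos : 0 < s := hTpos.trans_le hs.1
        have h2 : 0 ≤ W T - W s := sub_nonneg.2 (hanti hT2 (sub s hs.1) hs.1)
        have h3 : α * ‖v s‖ ^ 2 ≤ s * (- W' s) := by
          have := mul_le_mul_of_nonneg_left (hW' s (sub s hs.1)) hspos.le
          have e1 : s * (-(α / s) * ‖v s‖ ^ 2) = - (α * ‖v s‖ ^ 2) := by field_simp
          linarith
        have h4 : (α * ‖v s‖ ^ 2) / (2 * e * α) ≤
            (1 * (W T - W s) + s * (- W' s)) / (2 * e * α) := by
          gcongr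
          linarith
        have h5 : (α * ‖v s‖ ^ 2) / (2 * e * α) = ‖v s‖ ^ 2 / (2 * e) := by field_simp
        have h6 : ‖v s‖ ≤ e / 2 + ‖v s‖ ^ 2 / (2 * e) := by
          have : e / 2 + ‖v s‖ ^ 2 / (2 * e) - ‖v s‖ = (e - ‖v s‖) ^ 2 / (2 * e) := by
            field_simp
            ring
          have h7 : 0 ≤ (e - ‖v s‖) ^ 2 / (2 * e) := by positivity
          linarith
        linarith)
      (right_mem_Icc.2 ht')
    refine this.trans ?_
    have htpos : 0 < t := hTpos.trans_le ht'
    have h8 : W T - W t ≤ e ^ 2 * α := by linarith [hLW t (sub t ht')]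
    have h9 : t * (W T - W t) / (2 * e * α) ≤ t * (e ^ 2 * α) / (2 * e * α) := by gcongr
    have h10 : t * (e ^ 2 * α) / (2 * e * α) = e / 2 * t := by field_simp
    show e / 2 * t + t * (W T - W t) / (2 * e * α) ≤ e * t
    linarith
  refine ⟨max T (‖x T - z‖ / e), hT2.trans (le_max_left _ _), ?_⟩
  intro t ht
  have a1 := key t ((le_max_left _ _).trans (mem_Ici.1 ht))
  have a2 : ‖x T - z‖ ≤ e * t := by
    have := (le_max_right _ _).trans (mem_Ici.1 ht)
    rw [div_le_iff₀ hepos] at this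
    linarith
  calc ‖x t - z‖ = ‖(x t - x T) + (x T - z)‖ := by congr 1; abel
    _ ≤ ‖x t - x T‖ + ‖x T - z‖ := norm_add_le _ _
    _ ≤ ε * t := by rw [he] at a1 a2; linarith

theorem limit_helper {α β t₀ L m C : ℝ} (hα : 0 < α) (hβ : 0 < β) (ht₀ : 0 < t₀)
    {x v g y : ℝ → H} {φ W D : ℝ → ℝ}
    (hx : ∀ t ∈ Ici t₀, HasDerivAt x (v t) t)
    (hφ : ∀ t ∈ Ici t₀, HasDerivAt φ ⟪g t, v t⟫ t)
    (hyd : ∀ t ∈ Ici t₀, y t = v t + β • g t)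
    (hy : ∀ t ∈ Ici t₀, HasDerivAt y (-(α / t) • v t - g t) t)
    (hWd : ∀ t ∈ Ici t₀, W t = φ t + 1 / 2 * ‖v t‖ ^ 2)
    (hD : ∀ t ∈ Ici t₀, 0 ≤ D t)
    (hW : ∀ t ∈ Ici t₀, HasDerivAt W (-(α / t) * ‖v t‖ ^ 2 - D t) t)
    (hm : ∀ t ∈ Ici t₀, m ≤ φ t)
    (hC : ∀ t ∈ Ici t₀, ‖y t‖ ≤ C)
    (hL : Tendsto W atTop (𝓝 L)) (hLW : ∀ t ∈ Ici t₀, L ≤ W t)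
    {z : H} {q : ℝ} (hz : ∀ t ∈ Ici t₀, φ t - q ≤ ⟪g t, x t - z⟫) : L ≤ q := by
  by_contra! hlt
  set δ := L - q with hδ
  have hδpos : 0 < δ := by linarith
  have hC0 : 0 ≤ C := (norm_nonneg _).trans (hC t₀ self_mem_Ici)
  obtain ⟨T, hT, hxT⟩ := growth_helper hα ht₀ hx hW
    (fun t ht => by linarith [hD t ht]) hL hLW
    (ε := δ / (2 * (C + 1))) (by positivity) z
  have sub : ∀ s, T ≤ s → s ∈ Ici t₀ := fun s hs => hT.trans hs
  have hanti : AntitoneOn W (Ici t₀) := anti_helper hW (fun t ht => by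
    have : 0 < t := ht₀.trans_le ht
    have : 0 ≤ (α / t) * ‖v t‖ ^ 2 := by positivity
    linarith [hD t ht])
  set M := W t₀ - m with hM
  have hφM : ∀ t ∈ Ici t₀, φ t - m ≤ M := by
    intro t ht
    have := hanti self_mem_Ici ht ht
    have h2 := hWd t ht
    have : 0 ≤ ‖v t‖ ^ 2 := by positivity
    linarith
  have hN : ∀ t, T ≤ t → -(δ / 2 * t) ≤ ⟪y t, x t - z⟫ := by
    intro t ht
    have htpos : 0 < t := ht₀.trans_le (sub t ht)
    have h1 := (abs_le.1 (abs_real_inner_le_norm (y t) (x t - z))).1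
    have h2 : ‖y t‖ * ‖x t - z‖ ≤ (C + 1) * (δ / (2 * (C + 1)) * t) :=
      mul_le_mul (by linarith [hC t (sub t ht)]) (hxT t ht) (norm_nonneg _) (by positivity)
    have h3 : (C + 1) * (δ / (2 * (C + 1)) * t) = δ / 2 * t := by field_simp
    linarith
  set G : ℝ → ℝ := fun t => (⟪y t, x t - z⟫ - β * (φ t - m) + β * M) / t
    + α / 2 * ‖x t - z‖ ^ 2 / t ^ 2 + 3 / (2 * α) * W t + δ / 2 * Real.log t with hG
  have hGd : ∀ t ∈ Ici T, HasDerivAt G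
      (((⟪y t, v t⟫ + ⟪-(α / t) • v t - g t, x t - z⟫ - β * ⟪g t, v t⟫) * t
        - (⟪y t, x t - z⟫ - β * (φ t - m) + β * M) * 1) / t ^ 2
        + (α / 2 * (2 * ⟪x t - z, v t⟫) * t ^ 2 - α / 2 * ‖x t - z‖ ^ 2 * (2 * t)) / (t ^ 2) ^ 2
        + 3 / (2 * α) * (-(α / t) * ‖v t‖ ^ 2 - D t) + δ / 2 * t⁻¹) t := by
    intro t ht
    have hs := sub t ht
    have htpos : 0 < t := ht₀.trans_le hs
    have dx := (hx t hs).sub_const z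
    have d1 := ((((hy t hs).inner ℝ dx).sub (((hφ t hs).sub_const m).const_mul β)).add_const
      (β * M)).div (hasDerivAt_id t) htpos.ne'
    have d2 := ((dx.norm_sq.const_mul (α / 2)).div ((hasDerivAt_pow 2 t)) (by positivity))
    have d3 := (hW t hs).const_mul (3 / (2 * α))
    have d4 := (Real.hasDerivAt_log htpos.ne').const_mul (δ / 2)
    refine (((d1.add d2).add d3).add d4).congr_deriv ?_
    simp
  have hGn : AntitoneOn G (Ici T) := by
    refine anti_helper hGd ?_
    intro t ht
    have hs := sub t ht
    have htpos : 0 < t := ht₀.trans_le hs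
    have i1 : ⟪y t, v t⟫ = ‖v t‖ ^ 2 + β * ⟪g t, v t⟫ := by
      rw [hyd t hs, inner_add_left, real_inner_self_eq_norm_sq, real_inner_smul_left]
    have i2 : ⟪-(α / t) • v t - g t, x t - z⟫ = -(α / t) * ⟪x t - z, v t⟫ - ⟪g t, x t - z⟫ := by
      rw [inner_sub_left, real_inner_smul_left, real_inner_comm (x t - z) (v t)]
    rw [i1, i2]
    have n1 := hN t ht
    have n2 := hz t hs
    have n3 := hφM t hs
    have n4 := hD t hs
    have n5 := hWd t hs
    have n6 := hLW t hs
    have n7 : 0 ≤ ‖x t - z‖ ^ 2 := by positivity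
    have n8 : 0 ≤ ⟪g t, x t - z⟫ - δ + ‖v t‖ ^ 2 / 2 := by linarith
    generalize ⟪g t, x t - z⟫ = r at *
    generalize ⟪x t - z, v t⟫ = p at *
    generalize ⟪y t, x t - z⟫ = N at *
    generalize ⟪g t, v t⟫ = k at *
    generalize ‖x t - z‖ ^ 2 = h2 at *
    generalize ‖v t‖ ^ 2 = V2 at *
    generalize φ t = f at *
    have e1 : ((V2 + β * k + (-(α / t) * p - r) - β * k) * t - (N - β * (f - m) + β * M) * 1) / t ^ 2
        + (α / 2 * (2 * p) * t ^ 2 - α / 2 * h2 * (2 * t)) / (t ^ 2) ^ 2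
        + 3 / (2 * α) * (-(α / t) * V2 - D t) + δ / 2 * t⁻¹
        = -((r - δ + V2 / 2) / t + (N + δ / 2 * t) / t ^ 2 + β * (M - (f - m)) / t ^ 2
          + α * h2 / t ^ 3 + 3 / (2 * α) * D t) := by
      field_simp
      ring
    rw [e1]
    have m1 : 0 ≤ (r - δ + V2 / 2) / t := by positivity
    have m2 : 0 ≤ (N + δ / 2 * t) / t ^ 2 := div_nonneg (by linarith) (by positivity)
    have m3 : 0 ≤ β * (M - (f - m)) / t ^ 2 :=
      div_nonneg (mul_nonneg hβ.le (by linarith)) (by positivity)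
    have m4 : 0 ≤ α * h2 / t ^ 3 := by positivity
    have m5 : 0 ≤ 3 / (2 * α) * D t := by positivity
    linarith
  have hlow : ∀ t ∈ Ici T, -(δ / 2) + 3 / (2 * α) * L + δ / 2 * Real.log t ≤ G t := by
    intro t ht
    have hs := sub t ht
    have htpos : 0 < t := ht₀.trans_le hs
    have b1 : -(δ / 2) ≤ (⟪y t, x t - z⟫ - β * (φ t - m) + β * M) / t := by
      rw [le_div_iff₀ htpos]
      have := mul_nonneg hβ.le (sub_nonneg.2 (hφM t hs))
      linarith [hN t ht]
    have b2 : 0 ≤ α / 2 * ‖x t - z‖ ^ 2 / t ^ 2 := by positivity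
    have b3 : 3 / (2 * α) * L ≤ 3 / (2 * α) * W t :=
      mul_le_mul_of_nonneg_left (hLW t hs) (by positivity)
    simp only [hG]
    linarith
  have hlog := (Real.tendsto_log_atTop.eventually_gt_atTop
    ((G T + δ / 2 - 3 / (2 * α) * L) / (δ / 2))).and (eventually_ge_atTop T)
  obtain ⟨t, ht1, ht2⟩ := hlog.exists
  rw [div_lt_iff₀ (by positivity)] at ht1
  have := hlow t ht2
  have := hGn self_mem_Ici ht2 ht2
  linarith

theorem core {α β t₀ m : ℝ} (hα : 0 < α) (hβ : 0 < β) (ht₀ : 0 < t₀)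
    {x v a g A : ℝ → H} {φ : ℝ → ℝ}
    (hx : ∀ t ∈ Ici t₀, HasDerivAt x (v t) t)
    (hv : ∀ t ∈ Ici t₀, HasDerivAt v (a t) t)
    (hg : ∀ t ∈ Ici t₀, HasDerivAt g (A t) t)
    (hφ : ∀ t ∈ Ici t₀, HasDerivAt φ ⟪g t, v t⟫ t)
    (hA : ∀ t ∈ Ici t₀, 0 ≤ ⟪A t, v t⟫)
    (heq : ∀ t ∈ Ici t₀, a t + (α / t) • v t + β • A t + g t = 0)
    (hm : ∀ t ∈ Ici t₀, m ≤ φ t)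
    (hz : ∀ c, m < c → ∃ z q, q < c ∧ ∀ t ∈ Ici t₀, φ t - q ≤ ⟪g t, x t - z⟫) :
    Tendsto (fun t => ‖v t‖) atTop (𝓝 0) ∧
    Tendsto (fun t => ‖g t‖) atTop (𝓝 0) ∧
    IntegrableOn (fun t => (1 / t) * ‖v t‖ ^ 2) (Set.Ici t₀) ∧
    IntegrableOn (fun t => (1 / t) * ‖g t‖ ^ 2) (Set.Ici t₀) := by
  have pos : ∀ t ∈ Ici t₀, 0 < t := fun t ht => ht₀.trans_le ht
  have hvc : ContinuousOn v (Ici t₀) := fun t ht => (hv t ht).continuousAt.continuousWithinAt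
  have hgc : ContinuousOn g (Ici t₀) := fun t ht => (hg t ht).continuousAt.continuousWithinAt
  have htc : ContinuousOn (fun t : ℝ => 1 / t) (Ici t₀) :=
    continuousOn_const.div continuousOn_id (fun t ht => (pos t ht).ne')
  set W : ℝ → ℝ := fun t => φ t + 1 / 2 * ‖v t‖ ^ 2 with hWdef
  set D : ℝ → ℝ := fun t => β * ⟪A t, v t⟫ with hDdef
  have hD : ∀ t ∈ Ici t₀, 0 ≤ D t := fun t ht => mul_nonneg hβ.le (hA t ht)
  have hW : ∀ t ∈ Ici t₀, HasDerivAt W (-(α / t) * ‖v t‖ ^ 2 - D t) t := by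
    intro t ht
    have ha : a t = -((α / t) • v t + β • A t + g t) := by
      rw [eq_neg_iff_add_eq_zero, ← heq t ht]; abel
    refine ((hφ t ht).add ((hv t ht).norm_sq.const_mul (1 / 2))).congr_deriv ?_
    rw [ha, inner_neg_right, inner_add_right, inner_add_right, real_inner_smul_right,
      real_inner_smul_right, real_inner_self_eq_norm_sq, real_inner_comm (A t) (v t),
      real_inner_comm (g t) (v t)]
    simp only [hDdef]
    ring
  have hWn : ∀ t ∈ Ici t₀, -(α / t) * ‖v t‖ ^ 2 - D t ≤ 0 := by
    intro t ht
    have := pos t ht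
    have : 0 ≤ (α / t) * ‖v t‖ ^ 2 := by positivity
    linarith [hD t ht]
  have hWm : ∀ t ∈ Ici t₀, m ≤ W t := by
    intro t ht
    have : 0 ≤ ‖v t‖ ^ 2 := by positivity
    simp only [hWdef]
    linarith [hm t ht]
  obtain ⟨L, hL, hLW, hWint⟩ := lim_helper hW hWn hWm
  set y : ℝ → H := fun t => v t + β • g t with hydef
  have hy : ∀ t ∈ Ici t₀, HasDerivAt y (-(α / t) • v t - g t) t := by
    intro t ht
    refine ((hv t ht).add ((hg t ht).const_smul β)).congr_deriv ?_
    rw [← sub_eq_zero, ← heq t ht]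
    module
  set E : ℝ → ℝ := fun t => 1 / 2 * ‖y t‖ ^ 2 + (1 + α * β / t) * (φ t - m) with hEdef
  have hE : ∀ t ∈ Ici t₀, HasDerivAt E
      (-(α / t) * ‖v t‖ ^ 2 - β * ‖g t‖ ^ 2 - α * β / t ^ 2 * (φ t - m)) t := by
    intro t ht
    have htp := pos t ht
    refine (((hy t ht).norm_sq.const_mul (1 / 2)).add
      ((((hasDerivAt_inv htp.ne').const_mul (α * β)).const_add 1).mul
        ((hφ t ht).sub_const m))).congr_deriv ?_
    have : ⟪y t, -(α / t) • v t - g t⟫ = -(α / t) * ‖v t‖ ^ 2 - ⟪g t, v t⟫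
        - α * β / t * ⟪g t, v t⟫ - β * ‖g t‖ ^ 2 := by
      simp only [hydef, inner_add_left, inner_sub_right, real_inner_smul_left,
        real_inner_smul_right, real_inner_self_eq_norm_sq, real_inner_comm (g t) (v t)]
      ring
    rw [this]
    field_simp
    ring
  have hEn : ∀ t ∈ Ici t₀,
      -(α / t) * ‖v t‖ ^ 2 - β * ‖g t‖ ^ 2 - α * β / t ^ 2 * (φ t - m) ≤ 0 := by
    intro t ht
    have := pos t ht
    have h0 := sub_nonneg.2 (hm t ht)
    have h1 : 0 ≤ (α / t) * ‖v t‖ ^ 2 := by positivity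
    have h2 : 0 ≤ β * ‖g t‖ ^ 2 := by positivity
    have h3 : 0 ≤ α * β / t ^ 2 * (φ t - m) := by positivity
    linarith
  have hEy : ∀ t ∈ Ici t₀, 1 / 2 * ‖y t‖ ^ 2 ≤ E t := by
    intro t ht
    have := pos t ht
    have h0 := sub_nonneg.2 (hm t ht)
    have h3 : 0 ≤ (1 + α * β / t) * (φ t - m) := by positivity
    simp only [hEdef]
    linarith
  have hE0 : ∀ t ∈ Ici t₀, 0 ≤ E t := fun t ht => le_trans (by positivity) (hEy t ht)
  have hEanti := anti_helper hE hEn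
  obtain ⟨K, hK, hKE, hEint⟩ := lim_helper hE hEn hE0
  have hC : ∀ t ∈ Ici t₀, ‖y t‖ ≤ Real.sqrt (2 * E t₀) := by
    intro t ht
    apply Real.le_sqrt_of_sq_le
    linarith [hEy t ht, hEanti self_mem_Ici ht ht]
  have I1 : IntegrableOn (fun t => (1 / t) * ‖v t‖ ^ 2) (Ici t₀) := by
    refine Integrable.mono' (hWint.const_mul (-(1 / α))) ?_ ?_
    · exact (htc.mul (hvc.norm.pow 2)).aestronglyMeasurable measurableSet_Ici
    · refine (ae_restrict_iff' measurableSet_Ici).2 (Eventually.of_forall ?_)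
      intro t ht
      have := pos t ht
      rw [Real.norm_of_nonneg (by positivity)]
      have e1 : -(1 / α) * (-(α / t) * ‖v t‖ ^ 2 - D t) = 1 / t * ‖v t‖ ^ 2 + 1 / α * D t := by
        field_simp
        ring
      rw [e1]
      have : 0 ≤ 1 / α * D t := mul_nonneg (by positivity) (hD t ht)
      linarith
  have I0 : IntegrableOn (fun t => ‖g t‖ ^ 2) (Ici t₀) := by
    refine Integrable.mono' (hEint.const_mul (-(1 / β))) ?_ ?_
    · exact (hgc.norm.pow 2).aestronglyMeasurable measurableSet_Ici
    · refine (ae_restrict_iff' measurableSet_Ici).2 (Eventually.of_forall ?_)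
      intro t ht
      have := pos t ht
      have h0 := sub_nonneg.2 (hm t ht)
      rw [Real.norm_of_nonneg (by positivity)]
      have e1 : -(1 / β) * (-(α / t) * ‖v t‖ ^ 2 - β * ‖g t‖ ^ 2 - α * β / t ^ 2 * (φ t - m))
          = ‖g t‖ ^ 2 + (α / (β * t) * ‖v t‖ ^ 2 + α / t ^ 2 * (φ t - m)) := by
        field_simp
        ring
      rw [e1]
      have : 0 ≤ α / (β * t) * ‖v t‖ ^ 2 + α / t ^ 2 * (φ t - m) := by positivity
      linarith
  have I2 : IntegrableOn (fun t => (1 / t) * ‖g t‖ ^ 2) (Ici t₀) := by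
    refine Integrable.mono' (I0.const_mul (1 / t₀)) ?_ ?_
    · exact (htc.mul (hgc.norm.pow 2)).aestronglyMeasurable measurableSet_Ici
    · refine (ae_restrict_iff' measurableSet_Ici).2 (Eventually.of_forall ?_)
      intro t ht
      have := pos t ht
      rw [Real.norm_of_nonneg (by positivity)]
      gcongr
      exact ht
  have hLm : L = m := by
    apply le_antisymm
    · by_contra! hlt
      obtain ⟨z, q, hq, hzq⟩ := hz L hlt
      have := limit_helper hα hβ ht₀ hx hφ (fun t _ => rfl) hy (fun t _ => rfl) hD hW hm hC
        hL hLW hzq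
      linarith
    · exact ge_of_tendsto hL ((eventually_ge_atTop t₀).mono hWm)
  rw [hLm] at hL
  have hWm0 : Tendsto (fun t => W t - m) atTop (𝓝 0) := by
    simpa using hL.sub_const m
  have hv2 : Tendsto (fun t => 1 / 2 * ‖v t‖ ^ 2) atTop (𝓝 0) := by
    refine tendsto_of_tendsto_of_tendsto_of_le_of_le' tendsto_const_nhds hWm0 ?_ ?_
    · exact Eventually.of_forall fun t => by positivity
    · filter_upwards [eventually_ge_atTop t₀] with t ht
      simp only [hWdef]
      linarith [hm t ht]
  have hf0 : Tendsto (fun t => φ t - m) atTop (𝓝 0) := by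
    have := hWm0.sub hv2
    simp only [sub_zero] at this
    refine this.congr fun t => ?_
    simp only [hWdef]
    ring
  have hv0 : Tendsto (fun t => ‖v t‖) atTop (𝓝 0) := by
    have := (hv2.const_mul 2).sqrt
    simp only [mul_zero, Real.sqrt_zero] at this
    refine this.congr fun t => ?_
    rw [show 2 * (1 / 2 * ‖v t‖ ^ 2) = ‖v t‖ ^ 2 by ring, Real.sqrt_sq (norm_nonneg _)]
  have hy2 : Tendsto (fun t => ‖y t‖) atTop (𝓝 (Real.sqrt (2 * K))) := by
    have h1 : Tendsto (fun t : ℝ => (1 + α * β / t) * (φ t - m)) atTop (𝓝 ((1 + 0) * 0)) :=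
      (tendsto_const_nhds.add (tendsto_const_nhds.div_atTop tendsto_id)).mul hf0
    have := ((hK.sub h1).const_mul 2).sqrt
    simp only [mul_zero, sub_zero] at this
    refine this.congr fun t => ?_
    simp only [hEdef]
    rw [show 2 * (1 / 2 * ‖y t‖ ^ 2 + (1 + α * β / t) * (φ t - m)
      - (1 + α * β / t) * (φ t - m)) = ‖y t‖ ^ 2 by ring, Real.sqrt_sq (norm_nonneg _)]
  have hbg : Tendsto (fun t => β * ‖g t‖) atTop (𝓝 (Real.sqrt (2 * K))) := by
    have hd : Tendsto (fun t => β * ‖g t‖ - ‖y t‖) atTop (𝓝 0) := by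
      refine squeeze_zero_norm (fun t => ?_) hv0
      have h1 : β * ‖g t‖ = ‖β • g t‖ := by rw [norm_smul, Real.norm_of_nonneg hβ.le]
      rw [h1, Real.norm_eq_abs]
      refine (abs_norm_sub_norm_le _ _).trans ?_
      simp [hydef]
    have := hd.add hy2
    simpa using this
  have hgl : Tendsto (fun t => ‖g t‖) atTop (𝓝 (Real.sqrt (2 * K) / β)) := by
    refine (hbg.div_const β).congr fun t => ?_
    field_simp
  refine ⟨hv0, ?_, I1, I2⟩
  set c := Real.sqrt (2 * K) / β with hc
  have hc0 : 0 ≤ c := by positivity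
  rcases hc0.eq_or_lt with h | h
  · rwa [← h] at hgl
  exfalso
  obtain ⟨T, hT⟩ := eventually_atTop.1
    ((hgl.eventually (lt_mem_nhds (half_lt_self h))).and (eventually_ge_atTop t₀))
  have I3 : IntegrableOn (fun _ : ℝ => (c / 2) ^ 2) (Ici T) := by
    refine Integrable.mono' (I0.mono_set (Ici_subset_Ici.2 (hT T le_rfl).2))
      aestronglyMeasurable_const ?_
    refine (ae_restrict_iff' measurableSet_Ici).2 (Eventually.of_forall ?_)
    intro t ht
    rw [Real.norm_of_nonneg (by positivity)]
    have := (hT t ht).1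
    gcongr
  rw [integrableOn_const_iff] at I3
  simp [h.ne'] at I3

theorem line_convex {Φ : H → ℝ} (hconv : ConvexOn ℝ univ Φ) (p w : H) :
    ConvexOn ℝ univ (fun s : ℝ => Φ (p + s • w)) := by
  refine ⟨convex_univ, ?_⟩
  intro s _ t _ a b ha hb hab
  have := hconv.2 (mem_univ (p + s • w)) (mem_univ (p + t • w)) ha hb hab
  convert this using 2
  have : p = (a + b) • p := by rw [hab, one_smul]
  conv_lhs => rw [this]
  simp only [smul_eq_mul]
  module

theorem line_deriv {Φ : H → ℝ} (hd : Differentiable ℝ Φ) (p w : H) (s : ℝ) :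
    HasDerivAt (fun s : ℝ => Φ (p + s • w)) ⟪gradient Φ (p + s • w), w⟫ s := by
  have h1 : HasDerivAt (fun s : ℝ => p + s • w) w s := by
    simpa using ((hasDerivAt_id s).smul_const w).const_add p
  have := (hd (p + s • w)).hasGradientAt.hasFDerivAt.comp_hasDerivAt s h1
  exact this.congr_deriv (by simp)

theorem stmt3 (α β t₀ : ℝ) (hα : 0 < α) (hβ : 0 < β) (ht₀ : 0 < t₀)
    (Φ : H → ℝ) (hconv : ConvexOn ℝ Set.univ Φ) (hΦ : ContDiff ℝ 2 Φ)
    (hbdd : BddBelow (Set.range Φ))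
    (x x' x'' : ℝ → H) (hsol : IsDINAVDSolution α β t₀ Φ x x' x'') :
    Tendsto (fun t => ‖x' t‖) atTop (𝓝 0) ∧
    Tendsto (fun t => ‖gradient Φ (x t)‖) atTop (𝓝 0) ∧
    IntegrableOn (fun t => (1 / t) * ‖x' t‖ ^ 2) (Set.Ici t₀) ∧
    IntegrableOn (fun t => (1 / t) * ‖gradient Φ (x t)‖ ^ 2) (Set.Ici t₀) := by

  obtain ⟨hx, hv, -, heq⟩ := hsol
  have hd : Differentiable ℝ Φ := hΦ.differentiable (by norm_num)
  have hgd : Differentiable ℝ (gradient Φ) := by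
    have h1 : ContDiff ℝ 1 (fderiv ℝ Φ) := hΦ.fderiv_right (by norm_num)
    have h2 := h1.differentiable (by norm_num)
    exact (InnerProductSpace.toDual ℝ H).symm.toContinuousLinearEquiv.differentiable.comp h2
  refine core (m := ⨅ p, Φ p) (A := fun t => (fderiv ℝ (gradient Φ) (x t)) (x' t))
    (φ := fun t => Φ (x t)) hα hβ ht₀ hx hv ?_ ?_ ?_ heq ?_ ?_
  · intro t ht
    exact (hgd (x t)).hasFDerivAt.comp_hasDerivAt t (hx t ht)
  · intro t ht
    have := (hd (x t)).hasGradientAt.hasFDerivAt.comp_hasDerivAt t (hx t ht)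
    exact this.congr_deriv (by simp)
  · intro t ht
    have hmono : Monotone (fun s : ℝ => ⟪gradient Φ (x t + s • x' t), x' t⟫) := by
      have := (line_convex hconv (x t) (x' t)).monotoneOn_deriv
        (fun s _ => (line_deriv hd (x t) (x' t) s).differentiableAt)
      rw [monotoneOn_univ] at this
      convert this using 1
      funext s
      exact (line_deriv hd (x t) (x' t) s).deriv.symm
    have h1 : HasDerivAt (fun s : ℝ => x t + s • x' t) (x' t) 0 := by
      simpa using ((hasDerivAt_id (0 : ℝ)).smul_const (x' t)).const_add (x t)
    have h2 := (hgd (x t + (0 : ℝ) • x' t)).hasFDerivAt.comp_hasDerivAt 0 h1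
    have h3 := (h2.inner ℝ (hasDerivAt_const (0 : ℝ) (x' t))).deriv
    have h4 := hmono.deriv_nonneg (x := 0)
    simp only [Function.comp_def] at h3
    rw [h3] at h4
    simpa using h4
  · intro t _
    exact ciInf_le hbdd (x t)
  · intro c hc
    obtain ⟨z, hz⟩ := exists_lt_of_ciInf_lt hc
    refine ⟨z, Φ z, hz, ?_⟩
    intro t _
    have hl := line_deriv hd (x t) (z - x t) 0
    have := (line_convex hconv (x t) (z - x t)).le_slope_of_hasDerivAt
      (mem_univ 0) (mem_univ 1) zero_lt_one hl
    simp only [slope, zero_smul, add_zero, one_smul, add_sub_cancel, sub_zero, inv_one, vsub_eq_sub] at this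
    rw [← neg_sub z (x t), inner_neg_right]
    linarith
end

section
/- Let α > 0, β > 0, t₀ > 0, let Φ : H → ℝ be convex and twice continuously differentiable with argmin Φ nonempty, and let x : [t₀, ∞) → H be a solution of (DIN-AVD). Then: (i) there exists a constant C and a time T ≥ t₀ such that for all t ≥ T, Φ(x(t)) − min Φ ≤ C/log t, ‖ẋ(t)‖ ≤ C/√(log t), and ‖∇Φ(x(t))‖ ≤ C/√(log t); (ii) ∫_{t₀}^∞ (1/t)(Φ(x(t)) − min Φ) dt < ∞. -/
open Filter MeasureTheory Set
open scoped Topology RealInnerProductSpace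

variable {H : Type*} [NormedAddCommGroup H] [InnerProductSpace ℝ H] [CompleteSpace H]

theorem grad_contDiff {Φ : H → ℝ} (hΦ : ContDiff ℝ 2 Φ) : ContDiff ℝ 1 (gradient Φ) := by
  have h1 : ContDiff ℝ 1 (fderiv ℝ Φ) := hΦ.fderiv_right (by norm_num)
  exact ((InnerProductSpace.toDual ℝ H).symm.toContinuousLinearEquiv.contDiff).comp h1

theorem hasDerivAt_comp_grad {Φ : H → ℝ} (hΦ : ContDiff ℝ 2 Φ) {x : ℝ → H} {v : H} {t : ℝ}
    (hx : HasDerivAt x v t) : HasDerivAt (fun s => Φ (x s)) ⟪gradient Φ (x t), v⟫ t := by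
  have h1 : DifferentiableAt ℝ Φ (x t) := hΦ.differentiable (by norm_num) _
  have h2 := h1.hasGradientAt.hasFDerivAt.comp_hasDerivAt t hx
  refine h2.congr_deriv ?_
  simp

theorem grad_ineq {Φ : H → ℝ} (hconv : ConvexOn ℝ Set.univ Φ) (hΦ : ContDiff ℝ 2 Φ) (a b : H) :
    ⟪gradient Φ a, b - a⟫ ≤ Φ b - Φ a := by
  have hline : ∀ s : ℝ, HasDerivAt (fun s : ℝ => a + s • (b - a)) (b - a) s := by
    intro s
    simpa using ((hasDerivAt_id s).smul_const (b - a)).const_add a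
  have hd := hasDerivAt_comp_grad hΦ (hline 0)
  have hc : ConvexOn ℝ Set.univ (fun s : ℝ => Φ (a + s • (b - a))) := by
    have := hconv.comp_affineMap (AffineMap.lineMap a b : ℝ →ᵃ[ℝ] H)
    have e : (fun s : ℝ => Φ (a + s • (b - a))) = Φ ∘ (AffineMap.lineMap a b : ℝ →ᵃ[ℝ] H) := by
      funext s
      simp [AffineMap.lineMap_apply, add_comm]
    rw [e]
    exact this
  have := hc.le_slope_of_hasDerivAt (Set.mem_univ 0) (Set.mem_univ 1) zero_lt_one hd
  simpa [slope_def_field] using this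

theorem hess_nonneg {Φ : H → ℝ} (hconv : ConvexOn ℝ Set.univ Φ) (hΦ : ContDiff ℝ 2 Φ) (a v : H) :
    0 ≤ ⟪fderiv ℝ (gradient Φ) a v, v⟫ := by
  have hline : ∀ s : ℝ, HasDerivAt (fun s : ℝ => a + s • v) v s := by
    intro s
    simpa using ((hasDerivAt_id s).smul_const v).const_add a
  have hg : DifferentiableAt ℝ (gradient Φ) (a + (0:ℝ) • v) :=
    (grad_contDiff hΦ).differentiable (by norm_num) _
  have hd := (hg.hasFDerivAt.comp_hasDerivAt (0:ℝ) (hline 0)).inner ℝ (hasDerivAt_const (0:ℝ) v)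
  have hm : Monotone (fun s : ℝ => ⟪gradient Φ (a + s • v), v⟫) := by
    intro s r hsr
    rcases hsr.eq_or_lt with rfl | hlt
    · exact le_rfl
    have h1 := grad_ineq hconv hΦ (a + s • v) (a + r • v)
    have h2 := grad_ineq hconv hΦ (a + r • v) (a + s • v)
    have e1 : a + r • v - (a + s • v) = (r - s) • v := by module
    have e2 : a + s • v - (a + r • v) = (s - r) • v := by module
    rw [e1, real_inner_smul_right] at h1
    rw [e2, real_inner_smul_right] at h2
    show ⟪gradient Φ (a + s • v), v⟫ ≤ ⟪gradient Φ (a + r • v), v⟫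
    by_contra! hcon
    nlinarith
  have h0 : 0 ≤ deriv (fun s : ℝ => ⟪gradient Φ (a + s • v), v⟫) 0 := hm.deriv_nonneg
  have h3 := hd.deriv
  simp only [Function.comp_def] at h3
  rw [h3] at h0
  simpa using h0

theorem antitone_aux {f f' : ℝ → ℝ} {T : ℝ} (hf : ∀ t, T ≤ t → HasDerivAt f (f' t) t)
    (hn : ∀ t, T ≤ t → f' t ≤ 0) {t : ℝ} (ht : T ≤ t) : f t ≤ f T := by
  have : AntitoneOn f (Set.Ici T) := by
    apply antitoneOn_of_hasDerivWithinAt_nonpos (f' := f') (convex_Ici T)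
    · exact fun s hs => (hf s hs).continuousAt.continuousWithinAt
    · intro s hs
      exact (hf s (interior_subset hs)).hasDerivWithinAt
    · intro s hs
      exact hn s (interior_subset hs)
  exact this (Set.mem_Ici.2 le_rfl) ht ht

theorem le_div_sqrt {a B l C : ℝ} (hl : 0 < l) (h : a ^ 2 * l ≤ B)
    (hBC : Real.sqrt B ≤ C) : a ≤ C / Real.sqrt l := by
  rw [le_div_iff₀ (Real.sqrt_pos.2 hl)]
  refine le_trans ?_ hBC
  apply Real.le_sqrt_of_sq_le
  rw [mul_pow, Real.sq_sqrt hl.le]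
  exact h

set_option maxHeartbeats 1000000 in
theorem stmt4 (α β t₀ : ℝ) (hα : 0 < α) (hβ : 0 < β) (ht₀ : 0 < t₀)
    (Φ : H → ℝ) (hconv : ConvexOn ℝ Set.univ Φ) (hΦ : ContDiff ℝ 2 Φ)
    (xstar : H) (hmin : ∀ z, Φ xstar ≤ Φ z)
    (x x' x'' : ℝ → H) (hsol : IsDINAVDSolution α β t₀ Φ x x' x'') :
    (∃ C T : ℝ, t₀ ≤ T ∧ ∀ t, T ≤ t →
      Φ (x t) - Φ xstar ≤ C / Real.log t ∧
      ‖x' t‖ ≤ C / Real.sqrt (Real.log t) ∧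
      ‖gradient Φ (x t)‖ ≤ C / Real.sqrt (Real.log t)) ∧
    IntegrableOn (fun t => (1 / t) * (Φ (x t) - Φ xstar)) (Set.Ici t₀) := by
  obtain ⟨hx, hx', -, heq⟩ := hsol
  obtain ⟨T, hTt₀, hT2, hTab⟩ : ∃ T : ℝ, t₀ ≤ T ∧ 2 ≤ T ∧ α * β ≤ T :=
    ⟨max t₀ (max 2 (α * β)), le_max_left _ _, le_trans (le_max_left _ _) (le_max_right _ _),
      le_trans (le_max_right _ _) (le_max_right _ _)⟩
  obtain ⟨K, hK1, hKα, hKβ⟩ : ∃ K : ℝ, 1 ≤ K ∧ 2 + β / 2 ≤ K * (α / 2) ∧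
      1 + β / 2 ≤ K * (β / 2) := by
    refine ⟨1 + (2 / α) * (2 + β / 2) + (2 / β) * (1 + β / 2), ?_, ?_, ?_⟩
    · have : 0 ≤ (2 / α) * (2 + β / 2) + (2 / β) * (1 + β / 2) := by positivity
      linarith
    · have e : (1 + (2 / α) * (2 + β / 2) + (2 / β) * (1 + β / 2)) * (α / 2)
        = (2 + β / 2) + (α / 2 + (2 / β) * (1 + β / 2) * (α / 2)) := by field_simp; ring
      rw [e]
      have : 0 ≤ α / 2 + (2 / β) * (1 + β / 2) * (α / 2) := by positivity
      linarith
    · have e : (1 + (2 / α) * (2 + β / 2) + (2 / β) * (1 + β / 2)) * (β / 2)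
        = (1 + β / 2) + (β / 2 + (2 / α) * (2 + β / 2) * (β / 2)) := by field_simp; ring
      rw [e]
      have : 0 ≤ β / 2 + (2 / α) * (2 + β / 2) * (β / 2) := by positivity
      linarith
  set g : ℝ → H := fun t => gradient Φ (x t) with hg
  set u : ℝ → ℝ := fun t => Φ (x t) - Φ xstar with hu
  have hu0 : ∀ t, 0 ≤ u t := fun t => sub_nonneg.2 (hmin _)
  have hug : ∀ t, u t ≤ ⟪x t - xstar, g t⟫ := by
    intro t
    have h := grad_ineq hconv hΦ (x t) xstar
    rw [← neg_sub (x t), inner_neg_right, real_inner_comm] at h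
    simp only [hu, hg]
    linarith
  -- energies
  set w : ℝ → H := fun t => x' t + β • g t with hw
  have hdw : ∀ t, t₀ ≤ t → HasDerivAt w (-(α / t) • x' t - g t) t := by
    intro t ht
    have hgd : DifferentiableAt ℝ (gradient Φ) (x t) :=
      (grad_contDiff hΦ).differentiable (by norm_num) _
    have h1 := hgd.hasFDerivAt.comp_hasDerivAt t (hx t ht)
    have h2 := (hx' t ht).add (h1.const_smul β)
    refine h2.congr_deriv ?_
    have h3 := heq t ht
    rw [← sub_eq_zero, ← h3]
    simp only [hg]
    module
  have hdu : ∀ t, t₀ ≤ t → HasDerivAt u ⟪g t, x' t⟫ t := fun t ht =>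
    (hasDerivAt_comp_grad hΦ (hx t ht)).sub_const _
  -- E1
  set E1 : ℝ → ℝ := fun t => u t + (1 / 2) * ⟪x' t, x' t⟫ with hE1
  set D1 : ℝ → ℝ := fun t => ⟪g t, x' t⟫ + (1 / 2) * (⟪x' t, x'' t⟫ + ⟪x'' t, x' t⟫) with hD1
  have hdE1 : ∀ t, t₀ ≤ t → HasDerivAt E1 (D1 t) t := fun t ht =>
    (hdu t ht).add (((hx' t ht).inner ℝ (hx' t ht)).const_mul _)
  have hD1n : ∀ t, t₀ ≤ t → D1 t ≤ 0 := by
    intro t ht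
    have htp : 0 < t := lt_of_lt_of_le ht₀ ht
    have h3 : x'' t = -(α / t) • x' t - β • (fderiv ℝ (gradient Φ) (x t)) (x' t) - g t := by
      rw [← sub_eq_zero, ← heq t ht]
      simp only [hg]
      module
    have h4 : ⟪x'' t, x' t⟫ = -(α / t) * ⟪x' t, x' t⟫
        - β * ⟪(fderiv ℝ (gradient Φ) (x t)) (x' t), x' t⟫ - ⟪g t, x' t⟫ := by
      rw [h3]
      simp only [inner_sub_left, real_inner_smul_left]
    have h5 := hess_nonneg hconv hΦ (x t) (x' t)
    have h6 : 0 ≤ (α / t) * ⟪x' t, x' t⟫ := mul_nonneg (by positivity) real_inner_self_nonneg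
    have h7 := mul_nonneg hβ.le h5
    simp only [hD1]
    rw [real_inner_comm (x'' t) (x' t)]
    linarith
  -- E2
  set E2 : ℝ → ℝ := fun t => u t + (1 / 2) * ⟪w t, w t⟫ with hE2
  set D2 : ℝ → ℝ := fun t => -(α / t) * ⟪x' t, x' t⟫ - β * ⟪g t, g t⟫
      - (α * β / t) * ⟪x' t, g t⟫ with hD2
  have hdE2 : ∀ t, t₀ ≤ t → HasDerivAt E2 (D2 t) t := by
    intro t ht
    refine ((hdu t ht).add (((hdw t ht).inner ℝ (hdw t ht)).const_mul _)).congr_deriv ?_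
    simp only [hD2, hw, inner_sub_left, inner_sub_right, inner_add_left, inner_add_right,
      real_inner_smul_left, real_inner_smul_right]
    rw [real_inner_comm (g t) (x' t)]
    ring
  have habs : ∀ a b : H, |⟪a, b⟫| ≤ (1 / 2) * (⟪a, a⟫ + ⟪b, b⟫) := by
    intro a b
    have h1 := abs_real_inner_le_norm a b
    rw [real_inner_self_eq_norm_sq, real_inner_self_eq_norm_sq]
    nlinarith [sq_nonneg (‖a‖ - ‖b‖)]
  have hD2n : ∀ t, T ≤ t → D2 t ≤ -((α / 2) * ⟪x' t, x' t⟫ + (β / 2) * ⟪g t, g t⟫) / t := by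
    intro t ht
    have htp : 0 < t := by linarith
    have h1 := abs_le.1 (habs (x' t) (β • g t))
    simp only [real_inner_smul_left, real_inner_smul_right] at h1
    have hgg : 0 ≤ ⟪g t, g t⟫ := real_inner_self_nonneg
    rw [le_div_iff₀ htp]
    have e : D2 t * t = -α * ⟪x' t, x' t⟫ - β * t * ⟪g t, g t⟫ - α * (β * ⟪x' t, g t⟫) := by
      simp only [hD2]; field_simp
    rw [e]
    have h2 : α * (-(β * ⟪x' t, g t⟫)) ≤ α * ((1 / 2) * (⟪x' t, x' t⟫ + β * (β * ⟪g t, g t⟫))) :=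
      mul_le_mul_of_nonneg_left (by linarith) hα.le
    have h3 : 0 ≤ (t - α * β) * (β * ⟪g t, g t⟫) :=
      mul_nonneg (by linarith) (mul_nonneg hβ.le hgg)
    have h4 : 0 ≤ (t - 1) * (β * ⟪g t, g t⟫) :=
      mul_nonneg (by linarith) (mul_nonneg hβ.le hgg)
    nlinarith
  -- Lyapunov function
  set L : ℝ → ℝ := fun t => ⟪x t - xstar, w t⟫ * t⁻¹
    + (α + 1) / 2 * (⟪x t - xstar, x t - xstar⟫ * (t⁻¹ * t⁻¹)) + K * E2 t with hL
  have hL0 : ∀ t, T ≤ t → 0 ≤ L t := by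
    intro t ht
    have h1 := abs_le.1 (habs (t⁻¹ • (x t - xstar)) (w t))
    simp only [real_inner_smul_left, real_inner_smul_right] at h1
    have h2 : 0 ≤ ⟪x t - xstar, x t - xstar⟫ * (t⁻¹ * t⁻¹) :=
      mul_nonneg real_inner_self_nonneg (mul_self_nonneg _)
    have h3 : 0 ≤ ⟪w t, w t⟫ := real_inner_self_nonneg
    have h4 := mul_nonneg hα.le h2
    have h5 : E2 t ≤ K * E2 t := by
      have : 0 ≤ E2 t := by simp only [hE2]; linarith [hu0 t]
      nlinarith
    have h6 : (1 / 2) * ⟪w t, w t⟫ ≤ E2 t := by simp only [hE2]; linarith [hu0 t]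
    simp only [hL]
    nlinarith
  obtain ⟨DL, hdL, hDL⟩ : ∃ DL : ℝ → ℝ, (∀ t, T ≤ t → HasDerivAt L (DL t) t) ∧
      ∀ t, T ≤ t → DL t ≤ -((u t + ⟪x' t, x' t⟫ + ⟪g t, g t⟫) / t) := by
    refine ⟨fun t => ((⟪x t - xstar, -(α / t) • x' t - g t⟫ + ⟪x' t, w t⟫) * t⁻¹
        + ⟪x t - xstar, w t⟫ * (-(t ^ 2)⁻¹))
        + (α + 1) / 2 * ((⟪x t - xstar, x' t⟫ + ⟪x' t, x t - xstar⟫) * (t⁻¹ * t⁻¹)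
          + ⟪x t - xstar, x t - xstar⟫ * (-(t ^ 2)⁻¹ * t⁻¹ + t⁻¹ * (-(t ^ 2)⁻¹)))
        + K * D2 t, fun t ht => ?_, ?_⟩
    · have htp : t ≠ 0 := by linarith
      have ht' : t₀ ≤ t := hTt₀.trans ht
      have hz := (hx t ht').sub_const xstar
      have hi := hasDerivAt_inv htp
      exact (((hz.inner ℝ (hdw t ht')).mul hi).add
        (((hz.inner ℝ hz).mul (hi.mul hi)).const_mul ((α + 1) / 2))).add
        ((hdE2 t ht').const_mul K)
    · intro t ht
      have htp : 0 < t := by linarith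
      have h1 := mul_le_mul_of_nonneg_left (hD2n t ht) (by linarith : 0 ≤ K)
      refine (add_le_add_right h1 _).trans ?_
      have hvv : 0 ≤ ⟪x' t, x' t⟫ := real_inner_self_nonneg
      have hgg : 0 ≤ ⟪g t, g t⟫ := real_inner_self_nonneg
      have hzz : 0 ≤ ⟪x t - xstar, x t - xstar⟫ := real_inner_self_nonneg
      have hvg := (abs_le.1 (habs (x' t) (g t))).2
      have hzg := hug t
      have hut := hu0 t
      simp only [hw, inner_sub_right, inner_add_right, real_inner_smul_right]
      simp only [← inner_sub_right]
      rw [real_inner_comm (x t - xstar) (x' t)]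
      generalize ⟪x t - xstar, x t - xstar⟫ = zz at *
      generalize ⟪x t - xstar, g t⟫ = zg at *
      generalize ⟪x t - xstar, x' t⟫ = zv at *
      generalize ⟪x' t, x' t⟫ = vv at *
      generalize ⟪x' t, g t⟫ = vg at *
      generalize ⟪g t, g t⟫ = gg at *
      generalize u t = ut at *
      have key : vv + β * vg - zg - K * ((α / 2) * vv + (β / 2) * gg) ≤ -(ut + vv + gg) := by
        have a1 := mul_le_mul_of_nonneg_right hKα hvv
        have a2 := mul_le_mul_of_nonneg_right hKβ hgg
        have a3 := mul_le_mul_of_nonneg_left hvg hβ.le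
        nlinarith
      have k2 := div_le_div_of_nonneg_right key htp.le
      have k3 : 0 ≤ β * zg / t ^ 2 := by
        have : 0 ≤ zg := hut.trans hzg
        positivity
      have k4 : 0 ≤ (α + 1) * zz / t ^ 3 := by positivity
      rw [neg_div] at k2
      refine le_trans (le_of_eq ?_) ((sub_le_self _ k3).trans' (sub_le_self _ k4) |>.trans k2)
      field_simp
      ring
  -- log bounds
  have hlog : ∀ t, T ≤ t → 0 < Real.log t := fun t ht => Real.log_pos (by linarith)
  have main : ∀ (M : ℝ) (E D : ℝ → ℝ), 0 ≤ M → (∀ t, T ≤ t → HasDerivAt E (D t) t) →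
      (∀ t, T ≤ t → D t ≤ 0) →
      (∀ t, T ≤ t → E t ≤ M * (u t + ⟪x' t, x' t⟫ + ⟪g t, g t⟫)) →
      ∃ B, ∀ t, T ≤ t → E t * Real.log t ≤ B := by
    intro M E D hM hE hD hEM
    refine ⟨M * L T + E T * Real.log T, fun t ht => ?_⟩
    have := antitone_aux (f := fun t => M * L t + E t * Real.log t)
      (f' := fun t => M * DL t + (D t * Real.log t + E t * t⁻¹)) (T := T)
      (fun s hs => ((hdL s hs).const_mul M).add
        ((hE s hs).mul (Real.hasDerivAt_log (by linarith)))) ?_ ht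
    · have h2 := mul_nonneg hM (hL0 t ht)
      linarith
    · intro s hs
      have hsp : 0 < s := by linarith
      have a1 := mul_le_mul_of_nonneg_left (hDL s hs) hM
      have a2 := mul_nonpos_of_nonpos_of_nonneg (hD s hs) (hlog s hs).le
      have a3 := mul_le_mul_of_nonneg_right (hEM s hs) (inv_pos.2 hsp).le
      rw [div_eq_mul_inv] at a1
      linarith
  obtain ⟨B1, hB1⟩ := main 1 E1 D1 zero_le_one (fun t ht => hdE1 t (hTt₀.trans ht))
    (fun t ht => hD1n t (hTt₀.trans ht)) (by
      intro t ht
      have hvv : 0 ≤ ⟪x' t, x' t⟫ := real_inner_self_nonneg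
      have hgg : 0 ≤ ⟪g t, g t⟫ := real_inner_self_nonneg
      simp only [hE1]
      linarith)
  have hwle : ∀ t, ⟪w t, w t⟫ ≤ 2 * ⟪x' t, x' t⟫ + 2 * β ^ 2 * ⟪g t, g t⟫ := by
    intro t
    have h1 := abs_le.1 (habs (x' t) (β • g t))
    simp only [real_inner_smul_left, real_inner_smul_right] at h1
    simp only [hw, inner_add_left, inner_add_right, real_inner_smul_left, real_inner_smul_right]
    rw [real_inner_comm (x' t) (g t)]
    nlinarith
  obtain ⟨B2, hB2⟩ := main (1 + β ^ 2) E2 D2 (by positivity) (fun t ht => hdE2 t (hTt₀.trans ht))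
    (fun t ht => (hD2n t ht).trans (by
      have htp : 0 < t := by linarith
      have hvv : 0 ≤ ⟪x' t, x' t⟫ := real_inner_self_nonneg
      have hgg : 0 ≤ ⟪g t, g t⟫ := real_inner_self_nonneg
      rw [neg_div]
      exact neg_nonpos.2 (by positivity))) (by
      intro t ht
      have hvv : 0 ≤ ⟪x' t, x' t⟫ := real_inner_self_nonneg
      have hgg : 0 ≤ ⟪g t, g t⟫ := real_inner_self_nonneg
      have := hwle t
      have h1 := mul_nonneg (sq_nonneg β) hvv
      have h2 := mul_nonneg (sq_nonneg β) (hu0 t)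
      simp only [hE2]
      nlinarith)
  refine ⟨?_, ?_⟩
  · obtain ⟨C, hC1, hC2, hC3⟩ : ∃ C : ℝ, B1 ≤ C ∧ Real.sqrt (2 * B1) ≤ C ∧
        Real.sqrt ((4 * B1 + 4 * B2) / β ^ 2) ≤ C :=
      ⟨max B1 (max (Real.sqrt (2 * B1)) (Real.sqrt ((4 * B1 + 4 * B2) / β ^ 2))),
        le_max_left _ _, le_trans (le_max_left _ _) (le_max_right _ _),
        le_trans (le_max_right _ _) (le_max_right _ _)⟩
    refine ⟨C, T, hTt₀, fun t ht => ?_⟩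
    have hl := hlog t ht
    have b1 := hB1 t ht
    have b2 := hB2 t ht
    simp only [hE1, hE2, real_inner_self_eq_norm_sq] at b1 b2
    have c0 := mul_nonneg (hu0 t) hl.le
    have c1 := mul_nonneg (sq_nonneg ‖x' t‖) hl.le
    refine ⟨?_, ?_, ?_⟩
    · rw [le_div_iff₀ hl]
      show u t * _ ≤ _
      nlinarith
    · exact le_div_sqrt hl (by nlinarith) hC2
    · refine le_div_sqrt hl ?_ hC3
      rw [le_div_iff₀ (by positivity)]
      show ‖g t‖ ^ 2 * _ * _ ≤ _
      have e : β • g t = w t - x' t := by simp [hw]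
      have h1 : β * ‖g t‖ ≤ ‖w t‖ + ‖x' t‖ := by
        have := norm_sub_le (w t) (x' t)
        rwa [← e, norm_smul, Real.norm_of_nonneg hβ.le] at this
      have h2 : (β * ‖g t‖) ^ 2 ≤ 2 * ‖w t‖ ^ 2 + 2 * ‖x' t‖ ^ 2 := by
        have : (β * ‖g t‖) ^ 2 ≤ (‖w t‖ + ‖x' t‖) ^ 2 :=
          pow_le_pow_left₀ (by positivity) h1 2
        nlinarith [sq_nonneg (‖w t‖ - ‖x' t‖)]
      have h3 := mul_le_mul_of_nonneg_right h2 hl.le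
      nlinarith
  · have hcont : ContinuousOn (fun t => (1 / t) * u t) (Set.Ici t₀) := by
      intro t ht
      have htp : t ≠ 0 := (lt_of_lt_of_le ht₀ ht).ne'
      have h1 : ContinuousAt (fun t : ℝ => 1 / t) t := by
        simpa using continuousAt_inv₀ htp
      exact (h1.mul (hdu t ht).continuousAt).continuousWithinAt
    rw [← Set.Icc_union_Ioi_eq_Ici hTt₀]
    refine IntegrableOn.union ?_ ?_
    · exact (hcont.mono Set.Icc_subset_Ici_self).integrableOn_Icc
    · refine integrableOn_Ioi_of_intervalIntegral_norm_bounded (b := id) (l := atTop) (L T) T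
        (fun i => ?_) tendsto_id ?_
      · exact ((hcont.mono (fun s hs => hTt₀.trans hs.1)).integrableOn_Icc).mono_set
          Set.Ioc_subset_Icc_self
      · filter_upwards [eventually_ge_atTop T] with i hi
        have hI : IntegrableOn (fun t => (1 / t) * u t) (Set.Icc T i) :=
          (hcont.mono (fun s hs => hTt₀.trans hs.1)).integrableOn_Icc
        have := intervalIntegral.integral_le_sub_of_hasDeriv_right_of_le (g := fun t => - L t)
          (g' := fun t => - DL t) (φ := fun t => (1 / t) * u t) hi
          (fun s hs => (hdL s hs.1).continuousAt.neg.continuousWithinAt)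
          (fun s hs => (hdL s hs.1.le).neg.hasDerivWithinAt) hI (by
            intro s hs
            have hs' : T ≤ s := hs.1.le
            have hsp : 0 < s := by linarith
            have h1 := hDL s hs'
            have hvv : 0 ≤ ⟪x' s, x' s⟫ := real_inner_self_nonneg
            have hgg : 0 ≤ ⟪g s, g s⟫ := real_inner_self_nonneg
            have h2 : 1 / s * u s ≤ (u s + ⟪x' s, x' s⟫ + ⟪g s, g s⟫) / s := by
              rw [one_div, inv_mul_eq_div]
              gcongr
              linarith
            linarith)
        have h0 := hL0 i hi
        refine le_trans (le_of_eq ?_) (this.trans (by linarith))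
        apply intervalIntegral.integral_congr
        intro s hs
        simp only [id, Set.uIcc_of_le hi] at hs
        have hsp : 0 < s := by linarith [hs.1]
        exact Real.norm_of_nonneg (mul_nonneg (by positivity) (hu0 s))
end

section
/- Let α ≥ 3, β > 0, t₀ > 0, let Φ : H → ℝ be convex and twice continuously differentiable with x* ∈ argmin Φ, and let x : [t₀, ∞) → H be a solution of (DIN-AVD). Then for every λ ∈ [2, α−1], the function t ↦ (t/(t−β))^{α−2} · 𝓔_λ(t) is nonincreasing on (max{t₀, β}, ∞), and 𝓔_λ(t) has a finite limit as t → ∞. -/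
open Filter MeasureTheory Set
open scoped Topology RealInnerProductSpace

variable {H : Type*} [NormedAddCommGroup H] [InnerProductSpace ℝ H] [CompleteSpace H]

/-- The energy function `𝓔_λ`. -/
noncomputable def energyE (α β lam : ℝ) (Φ : H → ℝ) (xstar : H) (x x' : ℝ → H) (t : ℝ) : ℝ :=
  t * (t - β * (lam + 2 - α)) * (Φ (x t) - Φ xstar)
    + (1 / 2) * ‖lam • (x t - xstar) + t • (x' t + β • gradient Φ (x t))‖ ^ 2
    + lam * (α - lam - 1) / 2 * ‖x t - xstar‖ ^ 2

lemma dinavd_conv_ineq {Φ : H → ℝ} (hconv : ConvexOn ℝ Set.univ Φ) (p q : H)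
    (hd : DifferentiableAt ℝ Φ p) : Φ p - Φ q ≤ ⟪p - q, gradient Φ p⟫ := by
  have h1 : HasDerivAt (fun s : ℝ => AffineMap.lineMap (k := ℝ) p q s) (q - p) 0 :=
    AffineMap.hasDerivAt_lineMap
  have h2 : HasFDerivAt Φ (InnerProductSpace.toDual ℝ H (gradient Φ p))
      (AffineMap.lineMap (k := ℝ) p q (0:ℝ)) := by
    simpa using hd.hasGradientAt.hasFDerivAt
  have h3 := h2.comp_hasDerivAt (0:ℝ) h1
  have h4 : ConvexOn ℝ Set.univ (Φ ∘ fun s : ℝ => AffineMap.lineMap (k := ℝ) p q s) := by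
    simpa using hconv.comp_affineMap (AffineMap.lineMap (k := ℝ) p q)
  have h5 := h4.le_slope_of_hasDerivAt (Set.mem_univ 0) (Set.mem_univ 1) one_pos h3
  rw [slope_def_field, InnerProductSpace.toDual_apply_apply, inner_sub_right] at h5
  simp only [Function.comp_apply, AffineMap.lineMap_apply_one, AffineMap.lineMap_apply_zero,
    sub_zero, div_one] at h5
  rw [real_inner_comm, inner_sub_right]
  linarith

lemma dinavd_energy_deriv (α β t₀ : ℝ) (ht₀ : 0 < t₀)
    (Φ : H → ℝ) (hΦ : ContDiff ℝ 2 Φ) (xstar : H)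
    (x x' x'' : ℝ → H) (hsol : IsDINAVDSolution α β t₀ Φ x x' x'') (lam : ℝ)
    (t : ℝ) (ht : t₀ ≤ t) :
    HasDerivAt (energyE α β lam Φ xstar x x')
      ((2 * t - β * (lam + 2 - α)) * (Φ (x t) - Φ xstar)
        - lam * (t - β) * ⟪x t - xstar, gradient Φ (x t)⟫
        - t * (α - 1 - lam) * ‖x' t‖ ^ 2 - t * β * (t - β) * ‖gradient Φ (x t)‖ ^ 2) t := by
  obtain ⟨hx, hx', -, hode⟩ := hsol
  have htpos : 0 < t := lt_of_lt_of_le ht₀ ht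
  have hx := hx t ht
  have hx' := hx' t ht
  have hode := hode t ht
  have hd : Differentiable ℝ Φ := hΦ.differentiable (by norm_num)
  have hg : Differentiable ℝ (gradient Φ) := by
    have h1 : ContDiff ℝ 1 (fderiv ℝ Φ) := hΦ.fderiv_right (by norm_num)
    have h2 : Differentiable ℝ (fderiv ℝ Φ) := h1.differentiable (by norm_num)
    exact (InnerProductSpace.toDual ℝ H).symm.toContinuousLinearEquiv.differentiable.comp h2
  have hgx : HasDerivAt (fun s => gradient Φ (x s)) (fderiv ℝ (gradient Φ) (x t) (x' t)) t :=
    (hg (x t)).hasFDerivAt.comp_hasDerivAt t hx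
  have hΦx : HasDerivAt (fun s => Φ (x s)) ⟪gradient Φ (x t), x' t⟫ t := by
    have := (hd (x t)).hasGradientAt.hasFDerivAt.comp_hasDerivAt t hx
    rw [InnerProductSpace.toDual_apply_apply] at this
    exact this
  have hy : HasDerivAt (fun s => x s - xstar) (x' t) t := hx.sub_const _
  have hu : HasDerivAt (fun s => lam • (x s - xstar) + s • (x' s + β • gradient Φ (x s)))
      ((lam + 1 - α) • x' t + (β - t) • gradient Φ (x t)) t := by
    have := (hy.const_smul lam).add ((hasDerivAt_id t).smul (hx'.add (hgx.const_smul β)))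
    refine this.congr_deriv ?_
    have e : x'' t + β • fderiv ℝ (gradient Φ) (x t) (x' t)
        = -((α / t) • x' t) - gradient Φ (x t) := by
      rw [← sub_eq_zero, ← hode]
      abel
    simp only [id, e, Pi.add_apply, Pi.smul_apply]
    rw [smul_sub, smul_neg, smul_smul, mul_div_cancel₀ _ htpos.ne']
    module
  have h1 : HasDerivAt (fun s : ℝ => s * (s - β * (lam + 2 - α)))
      (2 * t - β * (lam + 2 - α)) t := by
    have := (hasDerivAt_id t).mul ((hasDerivAt_id t).sub_const (β * (lam + 2 - α)))
    refine this.congr_deriv ?_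
    simp only [id]; ring
  have hE := ((h1.mul (hΦx.sub_const (Φ xstar))).add (hu.norm_sq.const_mul (1/2))).add
    (hy.norm_sq.const_mul (lam * (α - lam - 1) / 2))
  refine HasDerivAt.congr_deriv (f := energyE α β lam Φ xstar x x') hE ?_
  generalize gradient Φ (x t) = g
  generalize x' t = v
  generalize x t - xstar = y
  simp only [inner_add_left, inner_add_right, real_inner_smul_left, real_inner_smul_right,
    ← real_inner_self_eq_norm_sq, real_inner_comm v g, real_inner_comm v y, real_inner_comm g y]
  ring

lemma dinavd_energy_ge (α β : ℝ) (hβ : 0 < β)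
    (Φ : H → ℝ) (xstar : H) (hmin : ∀ z, Φ xstar ≤ Φ z)
    (x x' : ℝ → H) (lam : ℝ) (hlam : lam ∈ Set.Icc 2 (α - 1)) (t : ℝ) (ht : 0 < t) :
    t * (t - β) * (Φ (x t) - Φ xstar) ≤ energyE α β lam Φ xstar x x' t := by
  obtain ⟨hl2, hl⟩ := hlam
  unfold energyE
  have hf : 0 ≤ Φ (x t) - Φ xstar := sub_nonneg.2 (hmin _)
  have h1 : t * (t - β) * (Φ (x t) - Φ xstar)
      ≤ t * (t - β * (lam + 2 - α)) * (Φ (x t) - Φ xstar) := by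
    gcongr
    nlinarith
  have h2 : 0 ≤ lam * (α - lam - 1) / 2 * ‖x t - xstar‖ ^ 2 := by
    have : 0 ≤ lam * (α - lam - 1) := mul_nonneg (by linarith) (by linarith)
    positivity
  have h3 : 0 ≤ (1 / 2) * ‖lam • (x t - xstar) + t • (x' t + β • gradient Φ (x t))‖ ^ 2 := by
    positivity
  linarith

theorem stmt5 (α β t₀ : ℝ) (hα : 3 ≤ α) (hβ : 0 < β) (ht₀ : 0 < t₀)
    (Φ : H → ℝ) (hconv : ConvexOn ℝ Set.univ Φ) (hΦ : ContDiff ℝ 2 Φ)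
    (xstar : H) (hmin : ∀ z, Φ xstar ≤ Φ z)
    (x x' x'' : ℝ → H) (hsol : IsDINAVDSolution α β t₀ Φ x x' x'')
    (lam : ℝ) (hlam : lam ∈ Set.Icc 2 (α - 1)) :
    AntitoneOn (fun t => (t / (t - β)) ^ (α - 2) * energyE α β lam Φ xstar x x' t)
      (Set.Ioi (max t₀ β)) ∧
    ∃ L : ℝ, Tendsto (energyE α β lam Φ xstar x x') atTop (𝓝 L) := by
  have hanti : AntitoneOn (fun t => (t / (t - β)) ^ (α - 2) * energyE α β lam Φ xstar x x' t)
      (Set.Ioi (max t₀ β)) := by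
    have key : ∀ t ∈ Set.Ioi (max t₀ β), ∃ D ≤ 0, HasDerivAt
        (fun t => (t / (t - β)) ^ (α - 2) * energyE α β lam Φ xstar x x' t) D t := by
      intro t ht
      have htt : t₀ < t := lt_of_le_of_lt (le_max_left _ _) ht
      have htb : β < t := lt_of_le_of_lt (le_max_right _ _) ht
      have htpos : 0 < t := ht₀.trans htt
      have hs : 0 < t - β := sub_pos.2 htb
      have hE := dinavd_energy_deriv α β t₀ ht₀ Φ hΦ xstar x x' x'' hsol lam t htt.le
      have hge := dinavd_energy_ge α β hβ Φ xstar hmin x x' lam hlam t htpos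
      have hd : Differentiable ℝ Φ := hΦ.differentiable (by norm_num)
      have hcv := dinavd_conv_ineq hconv (x t) xstar (hd _)
      have hr : 0 < t / (t - β) := div_pos htpos hs
      have hq := ((hasDerivAt_id t).div ((hasDerivAt_id t).sub_const β) hs.ne').rpow_const
        (p := α - 2) (Or.inl hr.ne')
      have hq' : HasDerivAt (fun t => (t / (t - β)) ^ (α - 2))
          ((t / (t - β)) ^ (α - 2) * (-(α - 2) * β / (t * (t - β)))) t := by
        refine hq.congr_deriv ?_
        simp only [id, Pi.div_apply]
        rw [Real.rpow_sub_one hr.ne']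
        field_simp
        ring
      refine ⟨_, ?_, hq'.mul hE⟩
      obtain ⟨hl2, hl⟩ := hlam
      have hf : 0 ≤ Φ (x t) - Φ xstar := sub_nonneg.2 (hmin _)
      set F := Φ (x t) - Φ xstar
      set E := energyE α β lam Φ xstar x x' t
      set w := (t / (t - β)) ^ (α - 2)
      have hw : 0 < w := Real.rpow_pos_of_pos hr _
      have a1 : -(α - 2) * β / (t * (t - β)) * E ≤ -(α - 2) * β * F := by
        rw [div_mul_eq_mul_div, div_le_iff₀ (by positivity)]
        have : 0 ≤ (α - 2) * β := mul_nonneg (by linarith) hβ.le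
        nlinarith [mul_le_mul_of_nonneg_left hge this]
      have a2 : lam * (t - β) * F ≤ lam * (t - β) * ⟪x t - xstar, gradient Φ (x t)⟫ :=
        mul_le_mul_of_nonneg_left hcv (mul_nonneg (by linarith) hs.le)
      have a3 : 0 ≤ t * (α - 1 - lam) * ‖x' t‖ ^ 2 :=
        mul_nonneg (mul_nonneg htpos.le (by linarith)) (sq_nonneg _)
      have a4 : 0 ≤ t * β * (t - β) * ‖gradient Φ (x t)‖ ^ 2 := by positivity
      have a5 : 0 ≤ (lam - 2) * t * F := mul_nonneg (mul_nonneg (by linarith) htpos.le) hf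
      rw [mul_assoc, ← mul_add]
      refine mul_nonpos_of_nonneg_of_nonpos hw.le ?_
      nlinarith
    refine antitoneOn_of_deriv_nonpos (convex_Ioi _) ?_ ?_ ?_
    · intro t ht
      obtain ⟨D, -, h⟩ := key t ht
      exact h.continuousAt.continuousWithinAt
    · intro t ht
      obtain ⟨D, -, h⟩ := key t (interior_subset ht)
      exact h.differentiableAt.differentiableWithinAt
    · intro t ht
      obtain ⟨D, hD, h⟩ := key t (interior_subset ht)
      rw [h.deriv]; exact hD
  refine ⟨hanti, ?_⟩
  set G := fun t => (t / (t - β)) ^ (α - 2) * energyE α β lam Φ xstar x x' t with hG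
  set M := max t₀ β + 1 with hM
  have hmem : ∀ t, max t M ∈ Set.Ioi (max t₀ β) := fun t =>
    lt_of_lt_of_le (lt_add_one (max t₀ β)) (le_max_right t M)
  have hA : Antitone (fun t => G (max t M)) := fun a b hab =>
    hanti (hmem a) (hmem b) (max_le_max_right _ hab)
  have hpos : ∀ t ∈ Set.Ioi (max t₀ β), 0 ≤ G t := by
    intro t ht
    have htt : t₀ < t := lt_of_le_of_lt (le_max_left _ _) ht
    have htb : β < t := lt_of_le_of_lt (le_max_right _ _) ht
    have htpos : 0 < t := ht₀.trans htt
    have hs : 0 < t - β := sub_pos.2 htb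
    have hf : 0 ≤ Φ (x t) - Φ xstar := sub_nonneg.2 (hmin _)
    have hge := dinavd_energy_ge α β hβ Φ xstar hmin x x' lam hlam t htpos
    refine mul_nonneg (Real.rpow_nonneg (div_pos htpos hs).le _) (le_trans ?_ hge)
    positivity
  have hlim := tendsto_atTop_ciInf hA ⟨0, by rintro _ ⟨t, rfl⟩; exact hpos _ (hmem t)⟩
  have hw1 : Tendsto (fun t : ℝ => t / (t - β)) atTop (𝓝 1) := by
    have h1 : Tendsto (fun t : ℝ => 1 + β / (t - β)) atTop (𝓝 (1 + 0)) :=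
      tendsto_const_nhds.add (tendsto_const_nhds.div_atTop
        (tendsto_atTop_add_const_right _ (-β) tendsto_id))
    rw [add_zero] at h1
    refine h1.congr' ?_
    filter_upwards [eventually_gt_atTop β] with t ht
    have : t - β ≠ 0 := (sub_pos.2 ht).ne'
    field_simp
    ring
  have hw : Tendsto (fun t : ℝ => (t / (t - β)) ^ (α - 2)) atTop (𝓝 1) := by
    have := hw1.rpow_const (p := α - 2) (Or.inl one_ne_zero)
    simpa using this
  refine ⟨_, (hlim.div hw one_ne_zero).congr' ?_⟩
  filter_upwards [eventually_ge_atTop M] with t ht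
  have ht' : t ∈ Set.Ioi (max t₀ β) := by simpa [max_eq_left ht] using hmem t
  have htt : t₀ < t := lt_of_le_of_lt (le_max_left _ _) ht'
  have htb : β < t := lt_of_le_of_lt (le_max_right _ _) ht'
  have hwp : 0 < (t / (t - β)) ^ (α - 2) :=
    Real.rpow_pos_of_pos (div_pos (ht₀.trans htt) (sub_pos.2 htb)) _
  simp only [Pi.div_apply, max_eq_left ht, hG]
  exact mul_div_cancel_left₀ _ hwp.ne'
end

section
/- Let α ≥ 3, β > 0, t₀ > 0, let Φ : H → ℝ be convex and twice continuously differentiable with argmin Φ nonempty, and let x : [t₀, ∞) → H be a solution of (DIN-AVD). Then ∫_{t₀}^∞ t²‖∇Φ(x(t))‖² dt < ∞, and there is a constant C with ‖ẋ(t) + β∇Φ(x(t))‖ ≤ C/t for all t ≥ t₀. If moreover ∇Φ is Lipschitz continuous on bounded subsets of H, then there exist C′ and T ≥ t₀ such that ‖ẍ(t)‖ ≤ C′/√(ln t) for all t ≥ T. -/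
open Filter MeasureTheory Set
open scoped Topology RealInnerProductSpace

variable {H : Type*} [NormedAddCommGroup H] [InnerProductSpace ℝ H] [CompleteSpace H]

/-- Gradient inequality for convex differentiable functions. -/
theorem aux_grad_ineq (Φ : H → ℝ) (hconv : ConvexOn ℝ Set.univ Φ) (hd : Differentiable ℝ Φ)
    (a b : H) : Φ a + ⟪gradient Φ a, b - a⟫ ≤ Φ b := by
  have hc : ConvexOn ℝ Set.univ (fun s : ℝ => Φ (AffineMap.lineMap a b s)) := by
    have := hconv.comp_affineMap (AffineMap.lineMap a b : ℝ →ᵃ[ℝ] H)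
    simpa [Function.comp_def] using this
  have h1 : HasDerivAt (fun s : ℝ => (AffineMap.lineMap a b s : H)) (b - a) 0 :=
    AffineMap.hasDerivAt_lineMap
  have h2 : HasFDerivAt Φ (fderiv ℝ Φ ((AffineMap.lineMap a b (0:ℝ) : H)))
      ((AffineMap.lineMap a b (0:ℝ) : H)) := (hd _).hasFDerivAt
  have h3 := h2.comp_hasDerivAt (0:ℝ) h1
  have h4 := hc.le_slope_of_hasDerivAt (mem_univ 0) (mem_univ 1) one_pos h3
  simp only [AffineMap.lineMap_apply_zero, slope_def_field, AffineMap.lineMap_apply_one,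
    sub_zero, div_one] at h4
  rw [← toDual_gradient, InnerProductSpace.toDual_apply_apply] at h4
  linarith

theorem aux_antitone (T : ℝ) (f f' : ℝ → ℝ) (hf : ∀ t, T ≤ t → HasDerivAt f (f' t) t)
    (hf' : ∀ t, T ≤ t → f' t ≤ 0) : ∀ t, T ≤ t → f t ≤ f T := by
  have := antitoneOn_of_hasDerivWithinAt_nonpos (convex_Ici T) (f := f) (f' := f')
    (fun t ht => (hf t ht).continuousAt.continuousWithinAt)
    (fun t ht => (hf t (interior_subset ht)).hasDerivWithinAt)
    (fun t ht => hf' t (interior_subset ht))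
  intro t ht
  exact this (mem_Ici.2 le_rfl) ht ht

theorem aux_contDiff_gradient (Φ : H → ℝ) (hΦ : ContDiff ℝ 2 Φ) :
    ContDiff ℝ 1 (gradient Φ) := by
  have h : ContDiff ℝ 1 (fderiv ℝ Φ) := hΦ.fderiv_right (by norm_num)
  exact (InnerProductSpace.toDual ℝ H).symm.contDiff.comp h

/-- Derivative of `w = (α-1)(x-z) + t(x' + β∇Φ(x))`. -/
theorem aux_w_deriv (α β t₀ : ℝ) (ht₀ : 0 < t₀) (Φ : H → ℝ) (hΦ : ContDiff ℝ 2 Φ) (z : H)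
    (x x' x'' : ℝ → H) (hsol : IsDINAVDSolution α β t₀ Φ x x' x'') (t : ℝ) (ht : t₀ ≤ t) :
    HasDerivAt (fun s => (α - 1) • (x s - z) + s • (x' s + β • gradient Φ (x s)))
      ((β - t) • gradient Φ (x t)) t := by
  obtain ⟨h1, h2, -, h4⟩ := hsol
  have hx := h1 t ht
  have hx' := h2 t ht
  have he := h4 t ht
  have hg : HasDerivAt (fun s => gradient Φ (x s)) (fderiv ℝ (gradient Φ) (x t) (x' t)) t :=
    (((aux_contDiff_gradient Φ hΦ).differentiable (by norm_num) (x t)).hasFDerivAt).comp_hasDerivAt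
      t hx
  have hv := hx'.add (hg.const_smul β)
  have hw := ((hx.sub_const z).const_smul (α - 1)).add ((hasDerivAt_id t).smul hv)
  have htp : t ≠ 0 := (ht₀.trans_le ht).ne'
  refine hw.congr_deriv ?_
  have e2 : x'' t + β • (fderiv ℝ (gradient Φ) (x t)) (x' t)
      = - ((α / t) • x' t) - gradient Φ (x t) := by
    rw [← sub_eq_zero, ← he]; abel
  simp only [id, Pi.add_apply, Pi.smul_apply]
  rw [e2, smul_sub, smul_neg, smul_smul, mul_div_cancel₀ _ htp]
  module

theorem aux_energy_deriv (α β t₀ : ℝ) (hα : 3 ≤ α) (hβ : 0 < β) (ht₀ : 0 < t₀)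
    (Φ : H → ℝ) (hconv : ConvexOn ℝ Set.univ Φ) (hΦ : ContDiff ℝ 2 Φ)
    (z : H) (hz : ∀ w, Φ z ≤ Φ w)
    (x x' x'' : ℝ → H) (hsol : IsDINAVDSolution α β t₀ Φ x x' x'') (t : ℝ) (ht : t₀ ≤ t)
    (htβ : β < t) :
    ∃ d, HasDerivAt (fun s => s ^ 2 * (Φ (x s) - Φ z) + (s / (s - β)) *
      (‖(α - 1) • (x s - z) + s • (x' s + β • gradient Φ (x s))‖ ^ 2 / 2)) d t ∧
      d ≤ - (β * (t ^ 2 * ‖gradient Φ (x t)‖ ^ 2)) := by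
  have hd : Differentiable ℝ Φ := hΦ.differentiable (by norm_num)
  have hw := aux_w_deriv α β t₀ ht₀ Φ hΦ z x x' x'' hsol t ht
  have hf : HasDerivAt (fun s => Φ (x s)) (⟪gradient Φ (x t), x' t⟫) t := by
    have := ((hd (x t)).hasFDerivAt).comp_hasDerivAt t (hsol.1 t ht)
    rwa [← toDual_gradient, InnerProductSpace.toDual_apply_apply] at this
  have hsub : t - β ≠ 0 := (sub_pos.2 htβ).ne'
  have hq : HasDerivAt (fun s : ℝ => s / (s - β)) ((1 * (t - β) - t * 1) / (t - β) ^ 2) t :=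
    (hasDerivAt_id t).div ((hasDerivAt_id t).sub_const β) hsub
  have hp : HasDerivAt (fun s : ℝ => s ^ 2) (2 * t) t := by simpa using hasDerivAt_pow 2 t
  have hG := (hp.mul (hf.sub_const (Φ z))).add (hq.mul (hw.norm_sq.div_const 2))
  refine ⟨_, hG, ?_⟩
  have hgi := aux_grad_ineq Φ hconv hd (x t) z
  have htp : 0 < t := ht₀.trans_le ht
  have hfz := hz (x t)
  set g := gradient Φ (x t) with hgdef
  set w := (α - 1) • (x t - z) + t • (x' t + β • g) with hwdef
  have hin : ⟪w, g⟫ = (α - 1) * ⟪g, x t - z⟫ + t * (⟪g, x' t⟫ + β * ‖g‖ ^ 2) := by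
    rw [hwdef, inner_add_left, inner_smul_left, inner_smul_left, inner_add_left, inner_smul_left,
      real_inner_self_eq_norm_sq, real_inner_comm, real_inner_comm g (x' t)]
    simp
  have hneg : ⟪g, z - x t⟫ = - ⟪g, x t - z⟫ := by rw [← inner_neg_right, neg_sub]
  rw [hneg] at hgi
  have e1 : (1 * (t - β) - t * 1) / (t - β) ^ 2 * (‖w‖ ^ 2 / 2) ≤ 0 := by
    apply mul_nonpos_of_nonpos_of_nonneg
    · apply div_nonpos_of_nonpos_of_nonneg <;> nlinarith [sq_nonneg (t - β)]
    · positivity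
  have e2 : t / (t - β) * (2 * ⟪w, (β - t) • g⟫ / 2) = - t * ⟪w, g⟫ := by
    rw [inner_smul_right]; field_simp; ring
  rw [e2, hin]
  have e3 : (α - 1) * (Φ (x t) - Φ z) ≤ (α - 1) * ⟪g, x t - z⟫ :=
    mul_le_mul_of_nonneg_left (by linarith) (by linarith)
  have e4 : 2 * (Φ (x t) - Φ z) ≤ (α - 1) * (Φ (x t) - Φ z) :=
    mul_le_mul_of_nonneg_right (by linarith) (by linarith)
  have e5 := mul_le_mul_of_nonneg_left (e4.trans e3) htp.le
  linarith

theorem stmt7 (α β t₀ : ℝ) (hα : 3 ≤ α) (hβ : 0 < β) (ht₀ : 0 < t₀)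
    (Φ : H → ℝ) (hconv : ConvexOn ℝ Set.univ Φ) (hΦ : ContDiff ℝ 2 Φ)
    (hne : ∃ z : H, ∀ w, Φ z ≤ Φ w)
    (x x' x'' : ℝ → H) (hsol : IsDINAVDSolution α β t₀ Φ x x' x'') :
    IntegrableOn (fun t => t ^ 2 * ‖gradient Φ (x t)‖ ^ 2) (Set.Ici t₀) ∧
    (∃ C : ℝ, ∀ t, t₀ ≤ t → ‖x' t + β • gradient Φ (x t)‖ ≤ C / t) ∧
    ((∀ s : Set H, Bornology.IsBounded s →
        ∃ K : NNReal, LipschitzOnWith K (gradient Φ) s) →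
      ∃ C' T : ℝ, t₀ ≤ T ∧ ∀ t, T ≤ t → ‖x'' t‖ ≤ C' / Real.sqrt (Real.log t)) := by
  obtain ⟨z, hz⟩ := hne
  have hd : Differentiable ℝ Φ := hΦ.differentiable (by norm_num)
  have hgc : Continuous (gradient Φ) := (aux_contDiff_gradient Φ hΦ).continuous
  obtain ⟨T, hT0, hTβ⟩ : ∃ T, t₀ ≤ T ∧ β < T :=
    ⟨max t₀ (β + 1), le_max_left _ _, lt_of_lt_of_le (by linarith) (le_max_right _ _)⟩
  have hTpos : 0 < T := ht₀.trans_le hT0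
  have hxc : ContinuousOn x (Ici t₀) := fun t ht => (hsol.1 t ht).continuousAt.continuousWithinAt
  have hx'c : ContinuousOn x' (Ici t₀) :=
    fun t ht => (hsol.2.1 t ht).continuousAt.continuousWithinAt
  have hgxc : ContinuousOn (fun t => gradient Φ (x t)) (Ici t₀) := hgc.comp_continuousOn hxc
  have hphi : ContinuousOn (fun t => t ^ 2 * ‖gradient Φ (x t)‖ ^ 2) (Ici t₀) :=
    (continuousOn_id.pow 2).mul (hgxc.norm.pow 2)
  -- the energy
  obtain ⟨G, hGdef⟩ : ∃ G : ℝ → ℝ, G = (fun s => s ^ 2 * (Φ (x s) - Φ z) + (s / (s - β)) *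
      (‖(α - 1) • (x s - z) + s • (x' s + β • gradient Φ (x s))‖ ^ 2 / 2)) := ⟨_, rfl⟩
  have hE : ∀ t, ∃ d, T ≤ t → HasDerivAt G d t ∧
      d ≤ - (β * (t ^ 2 * ‖gradient Φ (x t)‖ ^ 2)) := by
    intro t
    by_cases h : T ≤ t
    · obtain ⟨d, h1, h2⟩ := aux_energy_deriv α β t₀ hα hβ ht₀ Φ hconv hΦ z hz x x' x'' hsol t
        (hT0.trans h) (hTβ.trans_le h)
      exact ⟨d, fun _ => ⟨hGdef ▸ h1, h2⟩⟩
    · exact ⟨0, fun h' => absurd h' h⟩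
  choose G' hG' using hE
  have hGle : ∀ t, T ≤ t → G t ≤ G T := aux_antitone T G G' (fun t ht => (hG' t ht).1)
    (fun t ht => (hG' t ht).2.trans (neg_nonpos.2 (by positivity)))
  have hGparts : ∀ t, T ≤ t → t ^ 2 * (Φ (x t) - Φ z) ≤ G T ∧
      ‖(α - 1) • (x t - z) + t • (x' t + β • gradient Φ (x t))‖ ^ 2 ≤ 2 * G T ∧ 0 ≤ G t := by
    intro t ht
    have h := hGle t ht
    have htp : 0 < t := hTpos.trans_le ht
    have hs : 0 < t - β := by linarith
    have hf : 0 ≤ t ^ 2 * (Φ (x t) - Φ z) := mul_nonneg (sq_nonneg t) (by linarith [hz (x t)])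
    have hq : 1 ≤ t / (t - β) := by rw [le_div_iff₀ hs]; linarith
    have hw : 0 ≤ ‖(α - 1) • (x t - z) + t • (x' t + β • gradient Φ (x t))‖ ^ 2 / 2 := by
      positivity
    have hGt : G t = t ^ 2 * (Φ (x t) - Φ z) + (t / (t - β)) *
      (‖(α - 1) • (x t - z) + t • (x' t + β • gradient Φ (x t))‖ ^ 2 / 2) := by rw [hGdef]
    have := mul_le_mul_of_nonneg_right hq hw
    refine ⟨?_, ?_, ?_⟩ <;> linarith
  have hG0 : 0 ≤ G T := (hGparts T le_rfl).2.2
  -- boundedness of x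
  have hxb : ∀ t, T ≤ t → ‖x t - z‖ ^ 2 / 2 ≤ ‖x T - z‖ ^ 2 / 2 + G T / 2 := by
    have key := aux_antitone T (fun t => t * (‖x t - z‖ ^ 2 / 2) - t * (G T / 2))
      (fun t => (1 * (‖x t - z‖ ^ 2 / 2) + t * (2 * ⟪x t - z, x' t⟫ / 2)) - 1 * (G T / 2))
      (fun t ht => by
        have h1 := ((hsol.1 t (hT0.trans ht)).sub_const z).norm_sq.div_const 2
        exact ((hasDerivAt_id t).mul h1).sub ((hasDerivAt_id t).mul_const _))
      (fun t ht => by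
        have hw := (hGparts t ht).2.1
        have hgi := aux_grad_ineq Φ hconv hd (x t) z
        have hzx := hz (x t)
        have htp : 0 < t := hTpos.trans_le ht
        set g := gradient Φ (x t) with hgdef
        set w := (α - 1) • (x t - z) + t • (x' t + β • g) with hwdef
        have hneg : ⟪g, z - x t⟫ = - ⟪x t - z, g⟫ := by
          rw [real_inner_comm, ← inner_neg_left, neg_sub]
        have hin : ⟪x t - z, w⟫ = (α - 1) * ‖x t - z‖ ^ 2
            + t * (⟪x t - z, x' t⟫ + β * ⟪x t - z, g⟫) := by
          rw [hwdef, inner_add_right, inner_smul_right, inner_smul_right, inner_add_right,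
            inner_smul_right, real_inner_self_eq_norm_sq]
        have hcs := real_inner_le_norm (x t - z) w
        have hpos : 0 ≤ t * (β * ⟪x t - z, g⟫) :=
          mul_nonneg htp.le (mul_nonneg hβ.le (by linarith))
        have h2 : 2 * ‖x t - z‖ ^ 2 ≤ (α - 1) * ‖x t - z‖ ^ 2 :=
          mul_le_mul_of_nonneg_right (by linarith) (sq_nonneg _)
        nlinarith [sq_nonneg (‖x t - z‖ - ‖w‖ / 2), sq_nonneg ‖x t - z‖])
    intro t ht
    have h := key t ht
    have htp : 0 < t := hTpos.trans_le ht
    have h3 : T * (‖x T - z‖ ^ 2 / 2) ≤ t * (‖x T - z‖ ^ 2 / 2) :=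
      mul_le_mul_of_nonneg_right ht (by positivity)
    have h4 : 0 ≤ T * (G T / 2) := by positivity
    have h5 : t * (‖x t - z‖ ^ 2 / 2) ≤ t * (‖x T - z‖ ^ 2 / 2 + G T / 2) := by linarith
    exact le_of_mul_le_mul_left h5 htp
  obtain ⟨R, hR0, hR⟩ : ∃ R : ℝ, 0 ≤ R ∧ ∀ t, T ≤ t → ‖x t - z‖ ≤ R := by
    refine ⟨Real.sqrt (‖x T - z‖ ^ 2 + G T), Real.sqrt_nonneg _, fun t ht => ?_⟩
    apply Real.le_sqrt_of_sq_le
    linarith [hxb t ht]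
  -- bound on the velocity
  obtain ⟨C, hC⟩ : ∃ C : ℝ, ∀ t, t₀ ≤ t → ‖x' t + β • gradient Φ (x t)‖ ≤ C / t := by
    have hvc : ContinuousOn (fun t => t • (x' t + β • gradient Φ (x t))) (Icc t₀ T) :=
      (continuousOn_id.smul (hx'c.add (hgxc.const_smul β))).mono Icc_subset_Ici_self
    obtain ⟨C₁, hC₁⟩ := isCompact_Icc.exists_bound_of_continuousOn hvc
    refine ⟨max C₁ (Real.sqrt (2 * G T) + (α - 1) * R), fun t ht => ?_⟩
    have htp : 0 < t := ht₀.trans_le ht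
    rw [le_div_iff₀ htp]
    have hn : ‖x' t + β • gradient Φ (x t)‖ * t = ‖t • (x' t + β • gradient Φ (x t))‖ := by
      rw [norm_smul, Real.norm_of_nonneg htp.le, mul_comm]
    rw [hn]
    rcases le_total t T with h | h
    · exact (hC₁ t ⟨ht, h⟩).trans (le_max_left _ _)
    · refine le_trans ?_ (le_max_right _ _)
      have h1 := Real.le_sqrt_of_sq_le (hGparts t h).2.1
      have h2 : ‖(α - 1) • (x t - z)‖ ≤ (α - 1) * R := by
        rw [norm_smul, Real.norm_of_nonneg (by linarith)]
        exact mul_le_mul_of_nonneg_left (hR t h) (by linarith)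
      have h3 : t • (x' t + β • gradient Φ (x t)) =
        ((α - 1) • (x t - z) + t • (x' t + β • gradient Φ (x t))) - (α - 1) • (x t - z) := by abel
      rw [h3]
      exact (norm_sub_le _ _).trans (add_le_add h1 h2)
  refine ⟨?_, ⟨C, hC⟩, ?_⟩
  · have hI : IntegrableOn (fun t => t ^ 2 * ‖gradient Φ (x t)‖ ^ 2) (Ioi T) := by
      refine integrableOn_Ioi_of_intervalIntegral_norm_bounded (G T / β) T (b := id) (l := atTop)
        (fun b => ?_) tendsto_id ?_
      · exact ((hphi.mono (Icc_subset_Ici_self.trans (Ici_subset_Ici.2 hT0))).integrableOn_Icc).mono_set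
          Ioc_subset_Icc_self
      · filter_upwards [eventually_ge_atTop T] with b hb
        have hnorm : (fun t => ‖t ^ 2 * ‖gradient Φ (x t)‖ ^ 2‖) =
            fun t => t ^ 2 * ‖gradient Φ (x t)‖ ^ 2 := by
          funext t; exact Real.norm_of_nonneg (by positivity)
        rw [hnorm]
        have := intervalIntegral.integral_le_sub_of_hasDeriv_right_of_le (a := T) (b := b)
          (g := fun t => - G t / β) (g' := fun t => - G' t / β)
          (φ := fun t => t ^ 2 * ‖gradient Φ (x t)‖ ^ 2) hb
          (fun t ht => ((hG' t ht.1).1.neg.div_const β).continuousAt.continuousWithinAt)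
          (fun t ht => ((hG' t ht.1.le).1.neg.div_const β).hasDerivWithinAt)
          ((hphi.mono (Icc_subset_Ici_self.trans (Ici_subset_Ici.2 hT0))).integrableOn_Icc)
          (fun t ht => by
            rw [le_div_iff₀ hβ]
            linarith [(hG' t ht.1.le).2])
        refine this.trans ?_
        have h0 := (hGparts b hb).2.2
        rw [← sub_div]
        exact div_le_div_of_nonneg_right (by linarith) hβ.le
    have hI2 : IntegrableOn (fun t => t ^ 2 * ‖gradient Φ (x t)‖ ^ 2) (Icc t₀ T) :=
      (hphi.mono Icc_subset_Ici_self).integrableOn_Icc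
    rw [← Icc_union_Ioi_eq_Ici hT0]
    exact hI2.union hI
  · intro hlip
    obtain ⟨K, hK⟩ := hlip (Metric.ball z (2 * R + 1)) Metric.isBounded_ball
    obtain ⟨L, hL1, hLK⟩ : ∃ L : ℝ, 1 ≤ L ∧ (K : ℝ) ≤ L := ⟨max 1 K, le_max_left _ _, le_max_right _ _⟩
    have hLp : 0 < L := by linarith
    have hlipL : ∀ a b : H, ‖a - z‖ < 2 * R + 1 → ‖b - z‖ < 2 * R + 1 →
        ‖gradient Φ a - gradient Φ b‖ ≤ L * ‖a - b‖ := by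
      intro a b ha hb
      have := hK.dist_le_mul a (by simpa [dist_eq_norm] using ha) b
        (by simpa [dist_eq_norm] using hb)
      rw [dist_eq_norm, dist_eq_norm] at this
      exact this.trans (mul_le_mul_of_nonneg_right hLK (norm_nonneg _))
    have hgz : gradient Φ z = 0 := by
      have h0 : fderiv ℝ Φ z = 0 :=
        IsLocalMin.fderiv_eq_zero (Filter.Eventually.of_forall hz)
      simp [gradient, h0]
    -- decay of the gradient
    have hg : ∀ t, T ≤ t → ‖gradient Φ (x t)‖ ≤ Real.sqrt (4 * L * G T) / t := by
      intro t ht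
      have htp : 0 < t := hTpos.trans_le ht
      have hxR := hR t ht
      have hgb : ‖gradient Φ (x t)‖ ≤ L * ‖x t - z‖ := by
        have := hlipL (x t) z (by linarith) (by simp; linarith)
        rwa [hgz, sub_zero] at this
      have hfb := (hGparts t ht).1
      set g := gradient Φ (x t) with hgdef
      have hstep : ‖(1 / (2 * L)) • g‖ = 1 / (2 * L) * ‖g‖ := by
        rw [norm_smul, Real.norm_of_nonneg (by positivity)]
      have hstep2 : 1 / (2 * L) * ‖g‖ ≤ ‖x t - z‖ / 2 := by
        rw [div_mul_eq_mul_div, div_le_iff₀ (by positivity)]; linarith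
      have hy : ‖(x t - (1 / (2 * L)) • g) - z‖ < 2 * R + 1 := by
        have : (x t - (1 / (2 * L)) • g) - z = (x t - z) - (1 / (2 * L)) • g := by abel
        rw [this]
        refine lt_of_le_of_lt (norm_sub_le _ _) ?_
        rw [hstep]; linarith
      have hgi := aux_grad_ineq Φ hconv hd (x t - (1 / (2 * L)) • g) (x t)
      have hl := hlipL (x t) (x t - (1 / (2 * L)) • g) (by linarith) hy
      rw [sub_sub_cancel, hstep] at hl
      rw [sub_sub_cancel, inner_smul_right] at hgi
      set g2 := gradient Φ (x t - (1 / (2 * L)) • g) with hg2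
      have hl' : ‖g - g2‖ ≤ ‖g‖ / 2 := by
        refine hl.trans (le_of_eq ?_); field_simp
      have hin : ‖g‖ ^ 2 / 2 ≤ ⟪g2, g⟫ := by
        have h1 : ⟪g - g2, g⟫ = ‖g‖ ^ 2 - ⟪g2, g⟫ := by
          rw [inner_sub_left, real_inner_self_eq_norm_sq]
        have h2 := real_inner_le_norm (g - g2) g
        have h3 := mul_le_mul_of_nonneg_right hl' (norm_nonneg g)
        nlinarith
      have hin2 := mul_le_mul_of_nonneg_left hin (show 0 ≤ 1 / (2 * L) by positivity)
      have hzy := hz (x t - (1 / (2 * L)) • g)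
      have hfin : ‖g‖ ^ 2 ≤ 4 * L * (Φ (x t) - Φ z) := by
        have h1 : 1 / (2 * L) * (‖g‖ ^ 2 / 2) ≤ Φ (x t) - Φ z := by linarith
        have h2 := mul_le_mul_of_nonneg_left h1 (show 0 ≤ 4 * L by positivity)
        refine le_trans (le_of_eq ?_) h2
        field_simp; norm_num
      rw [le_div_iff₀ htp]
      apply Real.le_sqrt_of_sq_le
      have h6 := mul_le_mul_of_nonneg_left hfin (sq_nonneg t)
      have h7 := mul_le_mul_of_nonneg_left hfb (show 0 ≤ 4 * L by positivity)
      nlinarith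
    obtain ⟨D, hD0, hD⟩ : ∃ D : ℝ, 0 ≤ D ∧ ∀ t, T ≤ t → ‖gradient Φ (x t)‖ ≤ D / t :=
      ⟨_, Real.sqrt_nonneg _, hg⟩
    have hC0 : 0 ≤ C := by
      have := (norm_nonneg _).trans (hC T hT0)
      rwa [le_div_iff₀ hTpos, zero_mul] at this
    have hx' : ∀ t, T ≤ t → ‖x' t‖ ≤ (C + β * D) / t := by
      intro t ht
      have h1 := hC t (hT0.trans ht)
      have h2 : ‖β • gradient Φ (x t)‖ ≤ β * (D / t) := by
        rw [norm_smul, Real.norm_of_nonneg hβ.le]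
        exact mul_le_mul_of_nonneg_left (hD t ht) hβ.le
      have h3 : x' t = (x' t + β • gradient Φ (x t)) - β • gradient Φ (x t) := by abel
      rw [h3]
      refine (norm_sub_le _ _).trans ((add_le_add h1 h2).trans (le_of_eq ?_))
      ring
    have hx'' : ∀ t, T ≤ t → ‖x'' t‖ ≤ ((α / T + β * L) * (C + β * D) + D) / t := by
      intro t ht
      have htp : 0 < t := hTpos.trans_le ht
      have he := hsol.2.2.2 t (hT0.trans ht)
      have h3 : x'' t = -((α / t) • x' t + β • (fderiv ℝ (gradient Φ) (x t)) (x' t)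
          + gradient Φ (x t)) := by
        rw [eq_neg_iff_add_eq_zero, ← he]; abel
      have hop : ‖fderiv ℝ (gradient Φ) (x t)‖ ≤ L := by
        refine (norm_fderiv_le_of_lipschitzOn ℝ (Metric.isOpen_ball.mem_nhds ?_) hK).trans hLK
        rw [Metric.mem_ball, dist_eq_norm]
        linarith [hR t ht]
      have hxv := hx' t ht
      have a1 : ‖(α / t) • x' t‖ ≤ α / T * ((C + β * D) / t) := by
        rw [norm_smul, Real.norm_of_nonneg (by positivity)]
        have : α / t ≤ α / T := div_le_div_of_nonneg_left (by linarith) hTpos ht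
        gcongr
      have a2 : ‖β • (fderiv ℝ (gradient Φ) (x t)) (x' t)‖ ≤ β * (L * ((C + β * D) / t)) := by
        rw [norm_smul, Real.norm_of_nonneg hβ.le]
        refine mul_le_mul_of_nonneg_left ?_ hβ.le
        exact (ContinuousLinearMap.le_opNorm _ _).trans (by gcongr)
      rw [h3, norm_neg]
      refine (norm_add₃_le).trans ((add_le_add (add_le_add a1 a2) (hD t ht)).trans (le_of_eq ?_))
      ring
    refine ⟨(α / T + β * L) * (C + β * D) + D, max T 2, hT0.trans (le_max_left _ _), fun t ht => ?_⟩
    have htT := (le_max_left _ _).trans ht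
    have ht2 : 2 ≤ t := (le_max_right _ _).trans ht
    refine (hx'' t htT).trans ?_
    have hlog : 0 < Real.log t := Real.log_pos (by linarith)
    have hsq : Real.sqrt (Real.log t) ≤ t := by
      rw [Real.sqrt_le_left (by linarith)]
      nlinarith [Real.log_le_sub_one_of_pos (show 0 < t by linarith)]
    exact div_le_div_of_nonneg_left (by positivity) (Real.sqrt_pos.2 hlog) hsq
end
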